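/- arXiv:1704.00749 — 6 statements merged into one kernel-verified Lean document; each statement's English description precedes it below -/
import Mathlib

section
/- Let T be a finite tree on vertex set {0,1,…,N} rooted at vertex 0, with a positive weight x_e > 0 on each edge e. For i ∈ {1,…,N} let P_i be the set of edges on the unique path from vertex 0 to vertex i, let σ_i be the parent of i (the neighbor of i on the path toward 0), and let C_i = {k ∈ {1,…,N} : σ_k = i} be the children of i. Define A ∈ ℝ^{N×N} by A_{ij} = 2 Σ_{e ∈ P_i ∩ P_j} x_e, and define a ∈ ℝ^{N×N} by a_{ii} = (1/2)( x_{{σ_i,i}}^{-1} + Σ_{k ∈ C_i} x_{{i,k}}^{-1} ), a_{ij} = −(1/2) x_{{i,j}}^{-1} if i and j are adjacent in T (i ≠ j, both nonzero vertices), and a_{ij} = 0 otherwise. Then A is a symmetric positive definite matrix and A a = I, i.e., a = A^{-1}. -/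
open Matrix

noncomputable section

namespace SimpleGraph

variable {V : Type*} {G : SimpleGraph V} {r u v : V}

theorem IsAcyclic.eq_of_isPath (hG : G.IsAcyclic) {p q : G.Walk u v} (hp : p.IsPath)
    (hq : q.IsPath) : p = q :=
  congrArg Subtype.val ((hG.subsingleton_path u v).elim ⟨p, hp⟩ ⟨q, hq⟩)

/-- In an acyclic graph, if `u` is adjacent to `v` and lies on the path to `v`, then that path
extends the path to `u` by the edge `uv`. -/
theorem IsAcyclic.eq_concat_of_mem_support (hG : G.IsAcyclic) {pu : G.Walk r u} {pv : G.Walk r v}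
    (hpu : pu.IsPath) (hpv : pv.IsPath) (h : G.Adj u v) (hu : u ∈ pv.support) :
    pv = pu.concat h ∧ v ∉ pu.support := by
  classical
  have htake : pv.takeUntil u hu = pu := hG.eq_of_isPath (hpv.takeUntil hu) hpu
  have hv : v ∉ pu.support :=
    htake ▸ Walk.endpoint_notMem_support_takeUntil hpv hu h.ne.symm
  exact ⟨hG.eq_of_isPath hpv (hpu.concat hv h), hv⟩

/-- Of two adjacent vertices of an acyclic graph, one lies on the path to the other. -/
theorem IsAcyclic.mem_edges_or_mem_edges (hG : G.IsAcyclic) {pu : G.Walk r u} {pv : G.Walk r v}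
    (hpu : pu.IsPath) (hpv : pv.IsPath) (h : G.Adj u v) :
    s(v, u) ∈ pv.edges ∨ s(u, v) ∈ pu.edges := by
  by_cases hv : v ∈ pu.support
  · right
    rw [(hG.eq_concat_of_mem_support hpv hpu h.symm hv).1]
    simp [Walk.edges_concat, Sym2.eq_swap]
  · left
    rw [hG.eq_of_isPath hpv (hpu.concat hv h)]
    simp [Walk.edges_concat, Sym2.eq_swap]

end SimpleGraph

section RootedForest

variable {N : ℕ} (σ : Fin N → Fin (N + 1))

/-- The edge joining a non-root vertex to its parent. -/
def parentEdge (k : Fin N) : Sym2 (Fin (N + 1)) := s(σ k, k.succ)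

/-- The matrix `1 - S`, where `S` has a one at `(k, i)` exactly when `i` is the parent of `k`. -/
def parentDiff : Matrix (Fin N) (Fin N) ℝ :=
  fun k i => (if k = i then 1 else 0) - if σ k = i.succ then 1 else 0

/-- The incidence matrix of non-root vertices and the edges on the paths from the root. -/
def pathIncidence (P : Fin (N + 1) → Finset (Sym2 (Fin (N + 1)))) : Matrix (Fin N) (Fin N) ℝ :=
  fun i k => if parentEdge σ k ∈ P i.succ then 1 else 0

variable {σ}

theorem parentEdge_injective {d : Fin (N + 1) → ℕ} (hd : ∀ i, d i.succ = d (σ i) + 1) :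
    Function.Injective (parentEdge σ) := by
  intro k l h
  rcases Sym2.eq_iff.mp h with ⟨-, h⟩ | ⟨h1, h2⟩
  · exact Fin.succ_injective _ h
  · have hk := hd k
    have hl := hd l
    rw [h1] at hk
    rw [← h2] at hl
    omega

variable {P : Fin (N + 1) → Finset (Sym2 (Fin (N + 1)))}

theorem exists_parentEdge_of_mem {d : Fin (N + 1) → ℕ} (hd : ∀ i, d i.succ = d (σ i) + 1)
    (hP0 : P 0 = ∅) (hP : ∀ i, P i.succ = insert (parentEdge σ i) (P (σ i)))
    (v : Fin (N + 1)) {e : Sym2 (Fin (N + 1))} (he : e ∈ P v) : ∃ k, parentEdge σ k = e := by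
  induction h : d v using Nat.strong_induction_on generalizing v with
  | _ n ih =>
    cases v using Fin.cases with
    | zero => simp [hP0] at he
    | succ i =>
      rw [hP, Finset.mem_insert] at he
      rcases he with rfl | he
      · exact ⟨i, rfl⟩
      · exact ih (d (σ i)) (by have := hd i; omega) (σ i) he rfl

theorem parentDiff_mul_pathIncidence (hinj : Function.Injective (parentEdge σ))
    (hP0 : P 0 = ∅) (hP : ∀ i, P i.succ = insert (parentEdge σ i) (P (σ i)))
    (hnot : ∀ i, parentEdge σ i ∉ P (σ i)) :
    parentDiff σ * pathIncidence σ P = 1 := by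
  ext i l
  have hparent : ∑ k, (if σ i = k.succ then (1 : ℝ) else 0) * pathIncidence σ P k l
      = if parentEdge σ l ∈ P (σ i) then 1 else 0 := by
    cases h : σ i using Fin.cases with
    | zero => simp [hP0, (Fin.succ_ne_zero _).symm]
    | succ j => simp only [Fin.succ_inj, ite_mul, one_mul, zero_mul, Finset.sum_ite_eq,
        Finset.mem_univ, if_true, pathIncidence]
  simp only [Matrix.mul_apply, parentDiff, sub_mul, Finset.sum_sub_distrib, hparent]
  simp only [ite_mul, one_mul, zero_mul, Finset.sum_ite_eq, Finset.mem_univ, if_true,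
    pathIncidence, hP, Finset.mem_insert, hinj.eq_iff, Matrix.one_apply]
  by_cases hil : l = i
  · subst hil
    simp [hnot]
  · simp [hil, Ne.symm hil]

theorem sum_inter_eq_pathIncidence (hinj : Function.Injective (parentEdge σ))
    (hcover : ∀ v, ∀ e ∈ P v, ∃ k, parentEdge σ k = e) (x : Sym2 (Fin (N + 1)) → ℝ)
    (i j : Fin N) :
    ∑ e ∈ P i.succ ∩ P j.succ, x e
      = ∑ k, pathIncidence σ P i k * x (parentEdge σ k) * pathIncidence σ P j k := by
  have himage : P i.succ ∩ P j.succ = (Finset.univ.filter fun k =>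
      parentEdge σ k ∈ P i.succ ∧ parentEdge σ k ∈ P j.succ).image (parentEdge σ) := by
    ext e
    simp only [Finset.mem_inter, Finset.mem_image, Finset.mem_filter, Finset.mem_univ, true_and]
    constructor
    · rintro ⟨hi, hj⟩
      obtain ⟨k, rfl⟩ := hcover _ _ hi
      exact ⟨k, ⟨hi, hj⟩, rfl⟩
    · rintro ⟨k, h, rfl⟩
      exact h
  rw [himage, Finset.sum_image hinj.injOn, Finset.sum_filter]
  refine Finset.sum_congr rfl fun k _ => ?_
  simp only [pathIncidence]
  split_ifs <;> simp_all

theorem sum_parentDiff_mul_self (hself : ∀ k, σ k ≠ k.succ)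
    (y : Fin N → ℝ) (i : Fin N) :
    ∑ k, parentDiff σ k i * y k * parentDiff σ k i
      = y i + ∑ k ∈ Finset.univ.filter fun k => σ k = i.succ, y k := by
  have hterm : ∀ k, parentDiff σ k i * y k * parentDiff σ k i
      = (if k = i then y k else 0) + if σ k = i.succ then y k else 0 := by
    intro k
    by_cases hk : k = i
    · subst hk
      simp [parentDiff, hself]
    · by_cases hs : σ k = i.succ <;> simp [parentDiff, hk, hs]
  simp [hterm, Finset.sum_add_distrib, Finset.sum_filter]

theorem sum_parentDiff_mul_of_ne (y : Fin N → ℝ) {i j : Fin N} (hij : i ≠ j) :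
    ∑ k, parentDiff σ k i * y k * parentDiff σ k j
      = -((if σ i = j.succ then y i else 0) + if σ j = i.succ then y j else 0) := by
  have hterm : ∀ k, parentDiff σ k i * y k * parentDiff σ k j
      = -((if k = i then (if σ i = j.succ then y i else 0) else 0)
        + if k = j then (if σ j = i.succ then y j else 0) else 0) := by
    intro k
    have hboth : ¬ (σ k = i.succ ∧ σ k = j.succ) := fun h =>
      hij (Fin.succ_injective _ (h.1.symm.trans h.2))
    by_cases hi : k = i
    · subst hi
      by_cases hs : σ k = k.succ <;> by_cases ht : σ k = j.succ <;>
        simp_all [parentDiff]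
    · by_cases hj : k = j
      · subst hj
        by_cases hs : σ k = k.succ <;> by_cases ht : σ k = i.succ <;>
          simp_all [parentDiff]
      · by_cases hs : σ k = i.succ <;> by_cases ht : σ k = j.succ <;>
          simp_all [parentDiff]
  simp [hterm, Finset.sum_add_distrib, Finset.sum_neg_distrib, -neg_add_rev]

end RootedForest

/-- Let T be a finite tree on vertices {0,…,N} rooted at 0 with positive edge weights x.
For i ∈ {1,…,N} (encoded as `i.succ : Fin (N+1)` for `i : Fin N`), let `p i.succ` be the
unique path from 0 to i, `σ i` the parent of i (the neighbor of i on the path toward 0),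
and the children of i the vertices k with σ k = i.  With
A i j = 2 Σ_{e ∈ P_i ∩ P_j} x e and a the claimed inverse (a_{ii} = (1/2)(x_{σ_i i}⁻¹ +
Σ_{k child of i} x_{ik}⁻¹), a_{ij} = −(1/2) x_{ij}⁻¹ for adjacent i ≠ j, 0 otherwise),
A is symmetric positive definite and A a = I, i.e. a = A⁻¹. -/
theorem stmt_0 (N : ℕ) (hN : 0 < N)
    (G : SimpleGraph (Fin (N + 1))) [DecidableRel G.Adj] (hG : G.IsTree)
    (x : Sym2 (Fin (N + 1)) → ℝ) (hx : ∀ e ∈ G.edgeSet, 0 < x e)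
    (p : ∀ i : Fin (N + 1), G.Walk 0 i) (hp : ∀ i, (p i).IsPath)
    (σ : Fin N → Fin (N + 1))
    (hσ : ∀ i : Fin N, G.Adj (σ i) i.succ ∧ s(σ i, i.succ) ∈ (p i.succ).edges)
    (A a : Matrix (Fin N) (Fin N) ℝ)
    (hAdef : ∀ i j : Fin N,
      A i j = 2 * ∑ e ∈ (p i.succ).edges.toFinset ∩ (p j.succ).edges.toFinset, x e)
    (hadef : ∀ i j : Fin N,
      a i j =
        if i = j then
          (1 / 2) * ((x s(σ i, i.succ))⁻¹
            + ∑ k ∈ Finset.univ.filter fun k : Fin N => σ k = i.succ,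
                (x s(i.succ, k.succ))⁻¹)
        else if G.Adj i.succ j.succ then -(1 / 2) * (x s(i.succ, j.succ))⁻¹
        else 0) :
    A.PosDef ∧ A * a = 1 ∧ a = A⁻¹ := by
  have hacyc := hG.isAcyclic
  have hext (i : Fin N) := hacyc.eq_concat_of_mem_support (hp (σ i)) (hp i.succ) (hσ i).1
    ((p i.succ).fst_mem_support_of_mem_edges (hσ i).2)
  have hd : ∀ i : Fin N, (p i.succ).length = (p (σ i)).length + 1 := fun i => by
    rw [(hext i).1, SimpleGraph.Walk.length_concat]
  have hself : ∀ k, σ k ≠ k.succ := fun k => (hσ k).1.ne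
  set P : Fin (N + 1) → Finset (Sym2 (Fin (N + 1))) := fun v => (p v).edges.toFinset with hPdef
  have hP0 : P 0 = ∅ := by
    have : p 0 = .nil := hacyc.eq_of_isPath (hp 0) .nil
    simp [hPdef, this]
  have hP : ∀ i : Fin N, P i.succ = insert (parentEdge σ i) (P (σ i)) := fun i => by
    ext e
    simp only [hPdef, List.mem_toFinset, Finset.mem_insert]
    rw [(hext i).1, SimpleGraph.Walk.edges_concat]
    simp [parentEdge, or_comm]
  have hnot : ∀ i, parentEdge σ i ∉ P (σ i) := fun i h =>
    (hext i).2 ((p (σ i)).snd_mem_support_of_mem_edges (List.mem_toFinset.mp h))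
  have hinj : Function.Injective (parentEdge σ) :=
    parentEdge_injective (d := fun v => (p v).length) hd
  have hcover : ∀ v, ∀ e ∈ P v, ∃ k, parentEdge σ k = e := fun v e he =>
    exists_parentEdge_of_mem (d := fun v => (p v).length) hd hP0 hP v he
  have hpar : ∀ i j : Fin N, s(i.succ, j.succ) ∈ (p i.succ).edges → σ i = j.succ := fun i j h =>
    ((hp i.succ).eq_penultimate_of_mem_edges (Sym2.eq_swap ▸ (hσ i).2)).trans
      ((hp i.succ).eq_penultimate_of_mem_edges h).symm
  have hadj : ∀ i j : Fin N, G.Adj i.succ j.succ → σ i = j.succ ∨ σ j = i.succ := fun i j h =>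
    (hacyc.mem_edges_or_mem_edges (hp i.succ) (hp j.succ) h).symm.imp (hpar i j) (hpar j i)
  have hpos : ∀ k, 0 < x (parentEdge σ k) := fun k => hx _ (hσ k).1
  set B := pathIncidence σ P
  set C := parentDiff σ
  have hCB : C * B = 1 := parentDiff_mul_pathIncidence hinj hP0 hP hnot
  have hBC : B * C = 1 := mul_eq_one_comm.mp hCB
  have hA : A = B * diagonal (fun k => 2 * x (parentEdge σ k)) * Bᵀ := by
    ext i j
    rw [hAdef, Matrix.mul_apply]
    change 2 * ∑ e ∈ P i.succ ∩ P j.succ, x e = _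
    rw [sum_inter_eq_pathIncidence hinj hcover, Finset.mul_sum]
    refine Finset.sum_congr rfl fun k _ => ?_
    rw [Matrix.mul_diagonal, Matrix.transpose_apply]
    ring
  have ha : a = Cᵀ * diagonal (fun k => (2 * x (parentEdge σ k))⁻¹) * C := by
    ext i j
    rw [hadef, Matrix.mul_apply]
    simp only [Matrix.mul_diagonal, Matrix.transpose_apply]
    split_ifs with hij hadjij
    · subst hij
      rw [sum_parentDiff_mul_self hself, mul_add, Finset.mul_sum]
      congr 1
      · rw [mul_inv, parentEdge]
        ring
      · refine Finset.sum_congr rfl fun k hk => ?_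
        rw [mul_inv, parentEdge, (Finset.mem_filter.mp hk).2]
        ring
    · rw [sum_parentDiff_mul_of_ne _ hij]
      have hexcl : ¬ (σ i = j.succ ∧ σ j = i.succ) := by
        rintro ⟨h1, h2⟩
        have hi := hd i
        have hj := hd j
        rw [h1] at hi
        rw [h2] at hj
        omega
      rcases hadj i j hadjij with h | h
      · rw [if_pos h, if_neg fun h' => hexcl ⟨h, h'⟩, parentEdge, h, Sym2.eq_swap, mul_inv]
        ring
      · rw [if_neg fun h' => hexcl ⟨h', h⟩, if_pos h, parentEdge, h, mul_inv]
        ring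
    · have hi : σ i ≠ j.succ := fun h => hadjij (h ▸ (hσ i).1.symm)
      have hj : σ j ≠ i.succ := fun h => hadjij (h ▸ (hσ j).1)
      rw [sum_parentDiff_mul_of_ne _ hij, if_neg hi, if_neg hj]
      simp
  have hAa : A * a = 1 := by
    have hT : Bᵀ * Cᵀ = 1 := by rw [← Matrix.transpose_mul, hCB, Matrix.transpose_one]
    have hD : diagonal (fun k => 2 * x (parentEdge σ k))
        * diagonal (fun k => (2 * x (parentEdge σ k))⁻¹) = 1 := by
      rw [Matrix.diagonal_mul_diagonal, ← Matrix.diagonal_one]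
      congr 1
      funext k
      exact mul_inv_cancel₀ (by have := hpos k; positivity)
    rw [hA, ha]
    calc _ = B * (diagonal (fun k => 2 * x (parentEdge σ k)) * (Bᵀ * Cᵀ)
          * diagonal (fun k => (2 * x (parentEdge σ k))⁻¹)) * C := by
            simp only [Matrix.mul_assoc]
      _ = 1 := by rw [hT, Matrix.mul_one, hD, Matrix.mul_one, hBC]
  refine ⟨?_, hAa, (Matrix.inv_eq_right_inv hAa).symm⟩
  have hdiag : (diagonal fun k => 2 * x (parentEdge σ k)).PosDef :=
    Matrix.PosDef.diagonal fun k => by have := hpos k; positivity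
  rw [hA, ← Matrix.conjTranspose_eq_transpose_of_trivial]
  exact hdiag.mul_mul_conjTranspose_same
    (Matrix.vecMul_injective_of_isUnit (IsUnit.of_mul_eq_one C hBC))

end
end

section
/- The gradient of the dual function is the affine map ∇D(z) = M z + r, where M is the 4N×4N block matrix M = [[−A, A, −I, I], [A, −A, I, −I], [−I, I, −A^{-1}, A^{-1}], [I, −I, A^{-1}, −A^{-1}]] and r = (v^min − d, d − v^max, q^min, −q^max). Consequently, ∇D is Lipschitz continuous with Lipschitz constant L = max_{i=1,…,N} 2(λ_i(A) + 1/λ_i(A)). -/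
open Matrix

noncomputable section

/-- Euclidean norm of a vector in ℝ^{4N}, represented as four blocks of ℝ^N. -/
def enorm4 {N : ℕ} (w : Fin 4 → Fin N → ℝ) : ℝ :=
  Real.sqrt (∑ b, ∑ i, w b i ^ 2)

/-- The (linearized) voltage map v(q) = A q + d. -/
def volt {N : ℕ} (A : Matrix (Fin N) (Fin N) ℝ) (d : Fin N → ℝ) (q : Fin N → ℝ) :
    Fin N → ℝ :=
  A *ᵥ q + d

/-- q(z) = λ^min − λ^max + A⁻¹(μ^min − μ^max). -/
def qOf {N : ℕ} (A : Matrix (Fin N) (Fin N) ℝ) (z : Fin 4 → Fin N → ℝ) : Fin N → ℝ :=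
  z 0 - z 1 + A⁻¹ *ᵥ (z 2 - z 3)

/-- ∇D(z) = (v^min − v(q(z)), v(q(z)) − v^max, q^min − q(z), q(z) − q^max). -/
def gradD {N : ℕ} (A : Matrix (Fin N) (Fin N) ℝ) (d vmin vmax qmin qmax : Fin N → ℝ)
    (z : Fin 4 → Fin N → ℝ) : Fin 4 → Fin N → ℝ :=
  ![vmin - volt A d (qOf A z), volt A d (qOf A z) - vmax,
    qmin - qOf A z, qOf A z - qmax]

/-- Identify the four-block representation of ℝ^{4N} with functions on
(Fin N ⊕ Fin N) ⊕ (Fin N ⊕ Fin N). -/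
def flatten4 {N : ℕ} (z : Fin 4 → Fin N → ℝ) : (Fin N ⊕ Fin N) ⊕ (Fin N ⊕ Fin N) → ℝ :=
  Sum.elim (Sum.elim (z 0) (z 1)) (Sum.elim (z 2) (z 3))

/-- The 4N×4N block matrix
M = [[−A, A, −I, I], [A, −A, I, −I], [−I, I, −A⁻¹, A⁻¹], [I, −I, A⁻¹, −A⁻¹]]. -/
def Mblock {N : ℕ} (A : Matrix (Fin N) (Fin N) ℝ) :
    Matrix ((Fin N ⊕ Fin N) ⊕ (Fin N ⊕ Fin N)) ((Fin N ⊕ Fin N) ⊕ (Fin N ⊕ Fin N)) ℝ :=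
  fromBlocks (fromBlocks (-A) A A (-A)) (fromBlocks (-1) 1 1 (-1))
    (fromBlocks (-1) 1 1 (-1)) (fromBlocks (-A⁻¹) (A⁻¹) (A⁻¹) (-A⁻¹))

/-- The coordinate of `x` along the `i`-th eigenvector of a Hermitian matrix. -/
def eigenCoord {N : ℕ} {A : Matrix (Fin N) (Fin N) ℝ} (hA : A.IsHermitian)
    (x : Fin N → ℝ) (i : Fin N) : ℝ :=
  (hA.eigenvectorBasis i).ofLp ⬝ᵥ x

lemma eigenCoord_add {N : ℕ} {A : Matrix (Fin N) (Fin N) ℝ} (hA : A.IsHermitian)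
    (x y : Fin N → ℝ) (i : Fin N) :
    eigenCoord hA (x + y) i = eigenCoord hA x i + eigenCoord hA y i :=
  dotProduct_add _ _ _

lemma eigenCoord_mulVec {N : ℕ} {A : Matrix (Fin N) (Fin N) ℝ} (hA : A.IsHermitian)
    (x : Fin N → ℝ) (i : Fin N) :
    eigenCoord hA (A *ᵥ x) i = hA.eigenvalues i * eigenCoord hA x i := by
  have hT : Aᵀ = A := by simpa [IsHermitian, conjTranspose_eq_transpose_of_trivial] using hA
  rw [eigenCoord, dotProduct_mulVec, ← mulVec_transpose, hT, hA.mulVec_eigenvectorBasis,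
    smul_dotProduct, smul_eq_mul, eigenCoord]

lemma sum_eigenCoord_sq {N : ℕ} {A : Matrix (Fin N) (Fin N) ℝ} (hA : A.IsHermitian)
    (x : Fin N → ℝ) : ∑ i, eigenCoord hA x i ^ 2 = ∑ i, x i ^ 2 := by
  have h := hA.eigenvectorBasis.sum_sq_norm_inner_right (WithLp.toLp 2 x)
  rw [EuclideanSpace.norm_sq_eq] at h
  simpa [EuclideanSpace.inner_eq_star_dotProduct, eigenCoord, dotProduct_comm] using h

lemma sq_mul_add_sq_le {l a c L : ℝ} (hl : 0 < l) (hL : 2 * (l + l⁻¹) ≤ L) :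
    4 * ((l * (a + c)) ^ 2 + (a + c) ^ 2) ≤ L ^ 2 * (a ^ 2 + (l * c) ^ 2) := by
  have hpos : 0 < l⁻¹ := inv_pos.mpr hl
  have hsq : (2 * (l + l⁻¹)) ^ 2 ≤ L ^ 2 := pow_le_pow_left₀ (by positivity) hL 2
  refine le_trans ?_ (mul_le_mul_of_nonneg_right hsq (by positivity))
  have key : (2 * (l + l⁻¹)) ^ 2 * (a ^ 2 + (l * c) ^ 2)
      - 4 * ((l * (a + c)) ^ 2 + (a + c) ^ 2)
      = 4 * (1 + (l⁻¹) ^ 2) * (a - l ^ 2 * c) ^ 2 := by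
    field_simp
    ring
  have : 0 ≤ 4 * (1 + (l⁻¹) ^ 2) * (a - l ^ 2 * c) ^ 2 := by positivity
  linarith

/-- The spectral estimate behind the Lipschitz constant. -/
lemma sum_sq_mulVec_add_le {N : ℕ} {A : Matrix (Fin N) (Fin N) ℝ} (hA : A.PosDef) {L : ℝ}
    (hL : ∀ i, 2 * (hA.1.eigenvalues i + (hA.1.eigenvalues i)⁻¹) ≤ L) (a c : Fin N → ℝ) :
    4 * (∑ i, (A *ᵥ (a + c)) i ^ 2 + ∑ i, (a + c) i ^ 2)
      ≤ L ^ 2 * (∑ i, a i ^ 2 + ∑ i, (A *ᵥ c) i ^ 2) := by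
  rw [← sum_eigenCoord_sq hA.1 (A *ᵥ (a + c)), ← sum_eigenCoord_sq hA.1 (a + c),
    ← sum_eigenCoord_sq hA.1 a, ← sum_eigenCoord_sq hA.1 (A *ᵥ c)]
  simp only [eigenCoord_mulVec, eigenCoord_add,
    ← Finset.sum_add_distrib, Finset.mul_sum]
  exact Finset.sum_le_sum fun i _ => sq_mul_add_sq_le (hA.eigenvalues_pos i) (hL i)

lemma flatten4_gradD {N : ℕ} {A : Matrix (Fin N) (Fin N) ℝ} (hA : IsUnit A.det)
    (d vmin vmax qmin qmax : Fin N → ℝ) (z : Fin 4 → Fin N → ℝ) :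
    flatten4 (gradD A d vmin vmax qmin qmax z)
      = Mblock A *ᵥ flatten4 z
        + Sum.elim (Sum.elim (vmin - d) (d - vmax)) (Sum.elim qmin (-qmax)) := by
  ext ((i | i) | (i | i)) <;>
    simp [flatten4, gradD, Mblock, volt, qOf, fromBlocks_mulVec, mulVec_add, mulVec_sub,
      neg_mulVec, mul_nonsing_inv A hA, Function.comp_def] <;>
    ring

lemma enorm4_gradD_sub_le {N : ℕ} {A : Matrix (Fin N) (Fin N) ℝ} (hA : A.PosDef) {L : ℝ}
    (hL₀ : 0 ≤ L) (hL : ∀ i, 2 * (hA.1.eigenvalues i + (hA.1.eigenvalues i)⁻¹) ≤ L)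
    (d vmin vmax qmin qmax : Fin N → ℝ) (z w : Fin 4 → Fin N → ℝ) :
    enorm4 (fun b i => gradD A d vmin vmax qmin qmax z b i
        - gradD A d vmin vmax qmin qmax w b i)
      ≤ L * enorm4 (fun b i => z b i - w b i) := by
  have hdet : IsUnit A.det := hA.det_pos.ne'.isUnit
  set u : Fin 4 → Fin N → ℝ := z - w with hu
  have hq : qOf A z - qOf A w = (u 0 - u 1) + A⁻¹ *ᵥ (u 2 - u 3) := by
    simp only [qOf, hu, Pi.sub_apply, mulVec_sub]
    abel
  have hvolt : volt A d (qOf A z) - volt A d (qOf A w) = A *ᵥ (qOf A z - qOf A w) := by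
    simp [volt, mulVec_sub]
  have hb : A *ᵥ (A⁻¹ *ᵥ (u 2 - u 3)) = u 2 - u 3 := by
    simp [mul_nonsing_inv A hdet]
  have hspec := sum_sq_mulVec_add_le hA hL (u 0 - u 1) (A⁻¹ *ᵥ (u 2 - u 3))
  rw [← hq, ← hvolt, hb] at hspec
  have hgrad : ∑ b, ∑ i, (gradD A d vmin vmax qmin qmax z b i
        - gradD A d vmin vmax qmin qmax w b i) ^ 2
      = 2 * (∑ i, (volt A d (qOf A z) - volt A d (qOf A w)) i ^ 2
        + ∑ i, (qOf A z - qOf A w) i ^ 2) := by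
    simp only [Fin.sum_univ_four, Finset.mul_sum, ← Finset.sum_add_distrib]
    refine Finset.sum_congr rfl fun i _ => ?_
    simp [gradD]
    ring
  have hpar : ∑ i, (u 0 - u 1) i ^ 2 + ∑ i, (u 2 - u 3) i ^ 2 ≤ 2 * ∑ b, ∑ i, u b i ^ 2 := by
    simp only [Fin.sum_univ_four, Finset.mul_sum, ← Finset.sum_add_distrib]
    refine Finset.sum_le_sum fun i _ => ?_
    simp only [Pi.sub_apply (u 0), Pi.sub_apply (u 2)]
    nlinarith [sq_nonneg (u 0 i + u 1 i), sq_nonneg (u 2 i + u 3 i)]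
  have hscaled := mul_le_mul_of_nonneg_left hpar (sq_nonneg L)
  refine Real.sqrt_le_iff.mpr ⟨mul_nonneg hL₀ (Real.sqrt_nonneg _), ?_⟩
  have hnn : 0 ≤ ∑ b, ∑ i, (z b i - w b i) ^ 2 := by positivity
  rw [mul_pow, enorm4, Real.sq_sqrt hnn, hgrad]
  change _ ≤ L ^ 2 * ∑ b, ∑ i, u b i ^ 2
  linarith

/-- The gradient of the dual function is the affine map ∇D(z) = M z + r with
r = (v^min − d, d − v^max, q^min, −q^max); consequently ∇D is Lipschitz continuous
with constant L = max_i 2(λ_i(A) + 1/λ_i(A)). -/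
theorem stmt_1 (N : ℕ) (hN : 0 < N) (A : Matrix (Fin N) (Fin N) ℝ) (hA : A.PosDef)
    (d vmin vmax qmin qmax : Fin N → ℝ)
    (hv : ∀ i, vmin i ≤ vmax i) (hq : ∀ i, qmin i ≤ qmax i)
    (L : ℝ)
    (hL : IsGreatest
      (Set.range fun i : Fin N => 2 * (hA.1.eigenvalues i + (hA.1.eigenvalues i)⁻¹)) L) :
    (∀ z : Fin 4 → Fin N → ℝ,
      flatten4 (gradD A d vmin vmax qmin qmax z)
        = Mblock A *ᵥ flatten4 z
          + Sum.elim (Sum.elim (vmin - d) (d - vmax)) (Sum.elim qmin (-qmax))) ∧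
    (∀ z w : Fin 4 → Fin N → ℝ,
      enorm4 (fun b i => gradD A d vmin vmax qmin qmax z b i
          - gradD A d vmin vmax qmin qmax w b i)
        ≤ L * enorm4 (fun b i => z b i - w b i)) := by
  have hbound : ∀ i, 2 * (hA.1.eigenvalues i + (hA.1.eigenvalues i)⁻¹) ≤ L :=
    fun i => hL.2 ⟨i, rfl⟩
  have hpos := hA.eigenvalues_pos ⟨0, hN⟩
  have hL₀ : 0 ≤ L := le_trans (by positivity) (hbound ⟨0, hN⟩)
  exact ⟨flatten4_gradD hA.det_pos.ne'.isUnit d vmin vmax qmin qmax,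
    enorm4_gradD_sub_le hA hL₀ hbound d vmin vmax qmin qmax⟩

end
end

section
/- Let A ∈ ℝ^{N×N} be symmetric positive definite with eigenvalues λ_1(A),…,λ_N(A), and define the 4N×4N block matrix M = [[−A, A, −I, I], [A, −A, I, −I], [−I, I, −A^{-1}, A^{-1}], [I, −I, A^{-1}, −A^{-1}]]. Then: (i) if A w = λ w with w ≠ 0, the vector v = (λ w, −λ w, w, −w) satisfies M v = −2(λ + 1/λ) v; (ii) M has rank N, so 0 is an eigenvalue of M with multiplicity 3N; hence the eigenvalues of M are −2(λ_i(A) + 1/λ_i(A)) for i = 1,…,N together with 0 with multiplicity 3N. -/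
open Matrix Polynomial

noncomputable section

/-- The left factor of `Mblock A`, with block rows `A, -A, 1, -1`. -/
def MblockLeft {N : ℕ} (A : Matrix (Fin N) (Fin N) ℝ) :
    Matrix ((Fin N ⊕ Fin N) ⊕ (Fin N ⊕ Fin N)) (Fin N) ℝ :=
  fromRows (fromRows A (-A)) (fromRows 1 (-1))

/-- The right factor of `Mblock A`, with block columns `-1, 1, -A⁻¹, A⁻¹`. -/
def MblockRight {N : ℕ} (A : Matrix (Fin N) (Fin N) ℝ) :
    Matrix (Fin N) ((Fin N ⊕ Fin N) ⊕ (Fin N ⊕ Fin N)) ℝ :=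
  fromCols (fromCols (-1) 1) (fromCols (-A⁻¹) A⁻¹)

theorem MblockLeft_mul_MblockRight {N : ℕ} {A : Matrix (Fin N) (Fin N) ℝ} (hA : IsUnit A.det) :
    MblockLeft A * MblockRight A = Mblock A := by
  simp [MblockLeft, MblockRight, Mblock, fromRows_mul_fromCols, mul_nonsing_inv A hA,
    -fromRows_mul, -mul_fromCols]

theorem MblockRight_mul_MblockLeft {N : ℕ} (A : Matrix (Fin N) (Fin N) ℝ) :
    MblockRight A * MblockLeft A = -(2 : ℝ) • (A + A⁻¹) := by
  simp only [MblockLeft, MblockRight, fromCols_mul_fromRows, neg_mul, one_mul, mul_neg, mul_one]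
  module

theorem rank_Mblock {N : ℕ} {A : Matrix (Fin N) (Fin N) ℝ} (hA : IsUnit A.det) :
    (Mblock A).rank = N := by
  apply le_antisymm
  · rw [← MblockLeft_mul_MblockRight hA]
    exact (rank_mul_le_left _ _).trans ((rank_le_card_width _).trans_eq (Fintype.card_fin N))
  · let L : Matrix (Fin N) ((Fin N ⊕ Fin N) ⊕ (Fin N ⊕ Fin N)) ℝ :=
      fromCols (fromCols 0 0) (fromCols 1 0)
    let R : Matrix ((Fin N ⊕ Fin N) ⊕ (Fin N ⊕ Fin N)) (Fin N) ℝ :=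
      fromRows (fromRows (-1) 0) (fromRows 0 0)
    have hL : L * MblockLeft A = 1 := by
      simp [L, MblockLeft, fromCols_mul_fromRows]
    have hR : MblockRight A * R = 1 := by
      simp [R, MblockRight, fromCols_mul_fromRows]
    have h : L * Mblock A * R = 1 := by
      rw [← MblockLeft_mul_MblockRight hA, ← Matrix.mul_assoc, hL, Matrix.one_mul, hR]
    calc N = (1 : Matrix (Fin N) (Fin N) ℝ).rank := by simp
      _ = (L * Mblock A * R).rank := by rw [h]
      _ ≤ (Mblock A).rank := (rank_mul_le_left _ _).trans (rank_mul_le_right _ _)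

/-- The eigenvalues of `-2 • (A + A⁻¹)` for positive definite `A`, counted with multiplicity. -/
theorem Matrix.PosDef.charpoly_neg_two_smul_add_inv {n : Type*} [Fintype n] [DecidableEq n]
    {A : Matrix n n ℝ} (hA : A.PosDef) :
    (-(2 : ℝ) • (A + A⁻¹)).charpoly =
      ∏ i, (X + C (2 * (hA.1.eigenvalues i + (hA.1.eigenvalues i)⁻¹))) := by
  set d := hA.1.eigenvalues
  set φ := Unitary.conjStarAlgAut ℝ (Matrix n n ℝ) hA.1.eigenvectorUnitary
  have hd (i : n) : d i ≠ 0 := (hA.eigenvalues_pos i).ne'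
  have hφ : A = φ (diagonal d) := hA.1.spectral_theorem
  have hinv : A⁻¹ = φ (diagonal fun i => (d i)⁻¹) := by
    apply inv_eq_right_inv
    rw [hφ, ← map_mul, diagonal_mul_diagonal]
    simp [hd]
  have h : -(2 : ℝ) • (A + A⁻¹) = φ (diagonal fun i => -(2 * (d i + (d i)⁻¹))) := by
    rw [hinv, hφ, ← map_add, ← map_smul, diagonal_add, ← diagonal_smul]
    congr 2
    ext i
    simp
  rw [h, Unitary.conjStarAlgAut_apply, charpoly_mul_comm, ← mul_assoc]
  simp only [Unitary.coe_star_mul_self, one_mul, charpoly_diagonal, map_neg, sub_neg_eq_add]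

theorem Mblock_mulVec_eigenvector {N : ℕ} {A : Matrix (Fin N) (Fin N) ℝ} (hA : IsUnit A.det)
    {lam : ℝ} {w : Fin N → ℝ} (hw : w ≠ 0) (h : A *ᵥ w = lam • w) :
    Mblock A *ᵥ Sum.elim (Sum.elim (lam • w) (-(lam • w))) (Sum.elim w (-w))
      = (-(2 * (lam + lam⁻¹)))
          • Sum.elim (Sum.elim (lam • w) (-(lam • w))) (Sum.elim w (-w)) := by
  have hinv : w = lam • A⁻¹ *ᵥ w := by
    rw [← mulVec_smul, ← h, mulVec_mulVec, nonsing_inv_mul A hA, one_mulVec]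
  have hlam : lam ≠ 0 := by
    rintro rfl
    exact hw (by simpa using hinv)
  have hinv' : A⁻¹ *ᵥ w = lam⁻¹ • w := by
    rw [eq_inv_smul_iff₀ hlam, ← hinv]
  have hv : Sum.elim (Sum.elim (lam • w) (-(lam • w))) (Sum.elim w (-w)) = MblockLeft A *ᵥ w := by
    simp [MblockLeft, fromRows_mulVec, neg_mulVec, h]
  rw [hv, ← MblockLeft_mul_MblockRight hA, ← mulVec_mulVec, mulVec_mulVec w (MblockRight A),
    MblockRight_mul_MblockLeft, smul_mulVec, add_mulVec, h, hinv', ← add_smul, smul_smul,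
    mulVec_smul, neg_mul]

/-- (i) If A w = λ w with w ≠ 0 then v = (λw, −λw, w, −w) satisfies M v = −2(λ + 1/λ) v;
(ii) M has rank N, 0 is an eigenvalue of M of multiplicity 3N, and the eigenvalues of M
are −2(λ_i(A) + 1/λ_i(A)), i = 1,…,N, together with 0 of multiplicity 3N (expressed via
the characteristic polynomial of M). -/
theorem stmt_2 (N : ℕ) (hN : 0 < N) (A : Matrix (Fin N) (Fin N) ℝ) (hA : A.PosDef) :
    (∀ (lam : ℝ) (w : Fin N → ℝ), w ≠ 0 → A *ᵥ w = lam • w →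
      Mblock A *ᵥ Sum.elim (Sum.elim (lam • w) (-(lam • w))) (Sum.elim w (-w))
        = (-(2 * (lam + lam⁻¹)))
            • Sum.elim (Sum.elim (lam • w) (-(lam • w))) (Sum.elim w (-w))) ∧
    (Mblock A).rank = N ∧
    Module.finrank ℝ (LinearMap.ker (Mblock A).mulVecLin) = 3 * N ∧
    (Mblock A).charpoly
      = X ^ (3 * N)
        * ∏ i : Fin N, (X + C (2 * (hA.1.eigenvalues i + (hA.1.eigenvalues i)⁻¹))) := by
  have hdet : IsUnit A.det := hA.det_pos.ne'.isUnit
  refine ⟨fun lam w hw h => Mblock_mulVec_eigenvector hdet hw h, rank_Mblock hdet, ?_, ?_⟩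
  · have h := (Mblock A).mulVecLin.finrank_range_add_finrank_ker
    have hr : Module.finrank ℝ (LinearMap.range (Mblock A).mulVecLin) = N := rank_Mblock hdet
    simp only [hr, Module.finrank_fintype_fun_eq_card, Fintype.card_sum, Fintype.card_fin] at h
    omega
  · have hcard : Fintype.card ((Fin N ⊕ Fin N) ⊕ (Fin N ⊕ Fin N)) - Fintype.card (Fin N)
        = 3 * N := by
      simp only [Fintype.card_sum, Fintype.card_fin]
      omega
    rw [← MblockLeft_mul_MblockRight hdet, charpoly_mul_comm_of_le _ _ (by simp; omega), hcard,
      MblockRight_mul_MblockLeft, hA.charpoly_neg_two_smul_add_inv]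

end
end

section
/- For every z ∈ ℝ₊^{4N} it holds that fes(q(z)) ≤ V(z), where fes(q) = dist((q, v(q)), [q^min, q^max] × [v^min, v^max]) and V(z) = ‖z − ⌈z + ∇D(z)⌉₊‖. In particular, fes(q(z)) = ‖⌈∇D(z)⌉₊‖ and ‖⌈∇D(z)⌉₊‖ ≤ ‖z − ⌈z + ∇D(z)⌉₊‖. -/
open Matrix

noncomputable section

/-- V(z) = ‖z − ⌈z + ∇D(z)⌉₊‖ (Euclidean norm, componentwise projection onto ℝ₊). -/
def Vfun {N : ℕ} (A : Matrix (Fin N) (Fin N) ℝ) (d vmin vmax qmin qmax : Fin N → ℝ)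
    (z : Fin 4 → Fin N → ℝ) : ℝ :=
  enorm4 (fun b i => z b i - max (z b i + gradD A d vmin vmax qmin qmax z b i) 0)

/-- fes(q) = Euclidean distance from (q, v(q)) to the box [q^min,q^max] × [v^min,v^max]. -/
def fes {N : ℕ} (A : Matrix (Fin N) (Fin N) ℝ) (d vmin vmax qmin qmax : Fin N → ℝ)
    (q : Fin N → ℝ) : ℝ :=
  sInf { r : ℝ | ∃ y1 y2 : Fin N → ℝ,
    (∀ i, qmin i ≤ y1 i ∧ y1 i ≤ qmax i) ∧ (∀ i, vmin i ≤ y2 i ∧ y2 i ≤ vmax i) ∧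
    r = Real.sqrt ((∑ i, (q i - y1 i) ^ 2) + ∑ i, (volt A d q i - y2 i) ^ 2) }

/-- The positive part of a step `g` is dominated by the displacement of the projected step
from a nonnegative point. -/
theorem sq_posPart_le_sq_sub_max {x g : ℝ} (hx : 0 ≤ x) :
    max g 0 ^ 2 ≤ (x - max (x + g) 0) ^ 2 := by
  rcases le_total g 0 with hg | hg
  · rw [max_eq_right hg]
    nlinarith [sq_nonneg (x - max (x + g) 0)]
  · rw [max_eq_left hg, max_eq_left (add_nonneg hx hg)]
    exact le_of_eq (by ring)

/-- The squared violations of the two bounds of an interval are at most the squared distance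
to any of its points. -/
theorem sq_violation_le_sq_sub {l u x y : ℝ} (hl : l ≤ y) (hu : y ≤ u) :
    max (l - x) 0 ^ 2 + max (x - u) 0 ^ 2 ≤ (x - y) ^ 2 := by
  rcases le_total (l - x) 0 with h | h <;> rcases le_total (x - u) 0 with h' | h' <;>
    simp only [max_eq_left, max_eq_right, h, h'] <;> nlinarith

/-- The squared distance to the projection onto an interval is the sum of the squared violations
of its two bounds. -/
theorem sq_sub_clamp {l u x : ℝ} (h : l ≤ u) :
    (x - max l (min x u)) ^ 2 = max (l - x) 0 ^ 2 + max (x - u) 0 ^ 2 := by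
  rcases le_total x l with hl | hl
  · rw [min_eq_left (hl.trans h), max_eq_left hl, max_eq_left (sub_nonneg.2 hl),
      max_eq_right (sub_nonpos.2 (hl.trans h))]
    ring
  · rw [max_eq_right (sub_nonpos.2 hl)]
    rcases le_total x u with hu | hu
    · rw [min_eq_left hu, max_eq_right hl, max_eq_right (sub_nonpos.2 hu)]
      ring
    · rw [min_eq_right hu, max_eq_right h, max_eq_left (sub_nonneg.2 hu)]
      ring

/-- The distance to the feasible box is the norm of the positive part of the dual gradient. -/
theorem fes_qOf_eq_enorm4 {N : ℕ} (A : Matrix (Fin N) (Fin N) ℝ)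
    (d vmin vmax qmin qmax : Fin N → ℝ)
    (hv : ∀ i, vmin i ≤ vmax i) (hq : ∀ i, qmin i ≤ qmax i) (z : Fin 4 → Fin N → ℝ) :
    fes A d vmin vmax qmin qmax (qOf A z)
      = enorm4 (fun b i => max (gradD A d vmin vmax qmin qmax z b i) 0) := by
  set q := qOf A z with hqz
  have hsum : ∑ b, ∑ i, max (gradD A d vmin vmax qmin qmax z b i) 0 ^ 2
      = ∑ i, (max (qmin i - q i) 0 ^ 2 + max (q i - qmax i) 0 ^ 2)
        + ∑ i, (max (vmin i - volt A d q i) 0 ^ 2 + max (volt A d q i - vmax i) 0 ^ 2) := by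
    simp only [Fin.sum_univ_four, gradD, ← hqz, Finset.sum_add_distrib]
    simp
    ring
  refine IsLeast.csInf_eq ⟨⟨fun i => max (qmin i) (min (q i) (qmax i)),
    fun i => max (vmin i) (min (volt A d q i) (vmax i)),
    fun i => ⟨le_max_left _ _, max_le (hq i) (min_le_right _ _)⟩,
    fun i => ⟨le_max_left _ _, max_le (hv i) (min_le_right _ _)⟩, ?_⟩, ?_⟩
  · simp only [enorm4, hsum, sq_sub_clamp (hq _), sq_sub_clamp (hv _)]
  · rintro r ⟨y1, y2, h1, h2, rfl⟩
    rw [enorm4, hsum]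
    exact Real.sqrt_le_sqrt (add_le_add
      (Finset.sum_le_sum fun i _ => sq_violation_le_sq_sub (h1 i).1 (h1 i).2)
      (Finset.sum_le_sum fun i _ => sq_violation_le_sq_sub (h2 i).1 (h2 i).2))

/-- For every z ∈ ℝ₊^{4N}: fes(q(z)) ≤ V(z); in particular fes(q(z)) = ‖⌈∇D(z)⌉₊‖ and
‖⌈∇D(z)⌉₊‖ ≤ ‖z − ⌈z + ∇D(z)⌉₊‖ = V(z). -/
theorem stmt_4 (N : ℕ) (hN : 0 < N) (A : Matrix (Fin N) (Fin N) ℝ) (hA : A.PosDef)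
    (d vmin vmax qmin qmax : Fin N → ℝ)
    (hv : ∀ i, vmin i ≤ vmax i) (hq : ∀ i, qmin i ≤ qmax i)
    (z : Fin 4 → Fin N → ℝ) (hz : ∀ b i, 0 ≤ z b i) :
    fes A d vmin vmax qmin qmax (qOf A z) ≤ Vfun A d vmin vmax qmin qmax z ∧
    fes A d vmin vmax qmin qmax (qOf A z)
      = enorm4 (fun b i => max (gradD A d vmin vmax qmin qmax z b i) 0) ∧
    enorm4 (fun b i => max (gradD A d vmin vmax qmin qmax z b i) 0)
      ≤ Vfun A d vmin vmax qmin qmax z := by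
  have hle : enorm4 (fun b i => max (gradD A d vmin vmax qmin qmax z b i) 0)
      ≤ Vfun A d vmin vmax qmin qmax z :=
    Real.sqrt_le_sqrt (Finset.sum_le_sum fun b _ => Finset.sum_le_sum fun i _ =>
      sq_posPart_le_sq_sub_max (hz b i))
  have heq := fes_qOf_eq_enorm4 A d vmin vmax qmin qmax hv hq z
  exact ⟨heq.trans_le hle, heq, hle⟩

end
end

section
/- Let ε > 0 and z = (λ, μ) ∈ ℝ₊^{4N} be such that V(z) > ε. Choose step sizes α, β > 0 with α < 2/L and β < min{ ε/(2 N^{3/2} L), √( α(1 − Lα/2) ε² / (2 N L) ) }. Define z̄ = (λ̄, μ̄) with λ̄ = λ + α ∇^λ D(z) and μ̄ = μ + β·sign(∇^μ D(z)) (sign componentwise). Then D(⌈z̄⌉₊) ≥ D(z) + δ(α,β), where δ(α,β) = min{ (α − (L/2)α²)·ε²/2 − N L β², (ε β L N)/(2 N^{3/2} L) − β² L N } > 0. -/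
open Matrix

noncomputable section

/-- sign(x) = 1 if x ≥ 0 and −1 if x < 0. -/
def sgn (x : ℝ) : ℝ := if 0 ≤ x then 1 else -1

/-- The Lagrangian dual function
D(z) = inf_q [ (1/2) qᵀAq + (λ^min)ᵀ(v^min − v(q)) + (λ^max)ᵀ(v(q) − v^max)
  + (μ^min)ᵀ(q^min − q) + (μ^max)ᵀ(q − q^max) ]. -/
def dualFun {N : ℕ} (A : Matrix (Fin N) (Fin N) ℝ) (d vmin vmax qmin qmax : Fin N → ℝ)
    (z : Fin 4 → Fin N → ℝ) : ℝ :=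
  ⨅ q : Fin N → ℝ,
    ((1 / 2) * (q ⬝ᵥ A *ᵥ q) + (z 0) ⬝ᵥ (vmin - volt A d q)
      + (z 1) ⬝ᵥ (volt A d q - vmax) + (z 2) ⬝ᵥ (qmin - q) + (z 3) ⬝ᵥ (q - qmax))

/-- The additive constant of the dual function: the part of the Lagrangian not involving `q`. -/
def dualOffset {N : ℕ} (d vmin vmax qmin qmax : Fin N → ℝ) (z : Fin 4 → Fin N → ℝ) : ℝ :=
  z 0 ⬝ᵥ (vmin - d) + z 1 ⬝ᵥ (d - vmax) + z 2 ⬝ᵥ qmin - z 3 ⬝ᵥ qmax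

theorem Matrix.PosDef.dotProduct_mulVec_comm {N : ℕ} {A : Matrix (Fin N) (Fin N) ℝ}
    (hA : A.PosDef) (x y : Fin N → ℝ) : x ⬝ᵥ A *ᵥ y = y ⬝ᵥ A *ᵥ x := by
  have hT : Aᵀ = A := (conjTranspose_eq_transpose_of_trivial A).symm.trans hA.1
  rw [dotProduct_mulVec, ← mulVec_transpose, hT, dotProduct_comm]

theorem mulVec_qOf {N : ℕ} {A : Matrix (Fin N) (Fin N) ℝ} (hA : A.PosDef)
    (z : Fin 4 → Fin N → ℝ) : A *ᵥ qOf A z = A *ᵥ (z 0 - z 1) + (z 2 - z 3) := by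
  have hdet : IsUnit A.det := (isUnit_iff_isUnit_det A).1 hA.isUnit
  rw [qOf, mulVec_add, mulVec_mulVec, mul_nonsing_inv A hdet, one_mulVec]

/-- Closed form of the dual function, with the infimum attained at `qOf A z`. -/
theorem dualFun_eq {N : ℕ} {A : Matrix (Fin N) (Fin N) ℝ} (hA : A.PosDef)
    (d vmin vmax qmin qmax : Fin N → ℝ) (z : Fin 4 → Fin N → ℝ) :
    dualFun A d vmin vmax qmin qmax z =
      dualOffset d vmin vmax qmin qmax z - (1 / 2) * (qOf A z ⬝ᵥ A *ᵥ qOf A z) := by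
  have key : ∀ q : Fin N → ℝ,
      (1 / 2) * (q ⬝ᵥ A *ᵥ q) + (z 0) ⬝ᵥ (vmin - volt A d q)
        + (z 1) ⬝ᵥ (volt A d q - vmax) + (z 2) ⬝ᵥ (qmin - q) + (z 3) ⬝ᵥ (q - qmax) =
      dualOffset d vmin vmax qmin qmax z - (1 / 2) * (qOf A z ⬝ᵥ A *ᵥ qOf A z) +
        (1 / 2) * ((q - qOf A z) ⬝ᵥ A *ᵥ (q - qOf A z)) := by
    intro q
    have h1 : q ⬝ᵥ A *ᵥ qOf A z =
        z 0 ⬝ᵥ A *ᵥ q - z 1 ⬝ᵥ A *ᵥ q + (z 2 ⬝ᵥ q - z 3 ⬝ᵥ q) := by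
      rw [mulVec_qOf hA, dotProduct_add, hA.dotProduct_mulVec_comm, sub_dotProduct,
        dotProduct_comm q, sub_dotProduct]
    have h2 := hA.dotProduct_mulVec_comm q (qOf A z)
    simp only [volt, dualOffset, dotProduct_sub, sub_dotProduct, dotProduct_add, mulVec_sub]
    linarith
  have hnn : ∀ x : Fin N → ℝ, 0 ≤ x ⬝ᵥ A *ᵥ x := fun x => by
    simpa using hA.posSemidef.dotProduct_mulVec_nonneg x
  unfold dualFun
  simp_rw [key]
  apply le_antisymm
  · refine (ciInf_le ⟨dualOffset d vmin vmax qmin qmax z -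
      (1 / 2) * (qOf A z ⬝ᵥ A *ᵥ qOf A z), ?_⟩ (qOf A z)).trans (by simp)
    rintro _ ⟨q, rfl⟩
    have := hnn (q - qOf A z)
    dsimp only
    linarith
  · refine le_ciInf fun q => ?_
    have := hnn (q - qOf A z)
    linarith

/-- Second-order expansion of the dual function, which is quadratic. -/
theorem dualFun_add {N : ℕ} {A : Matrix (Fin N) (Fin N) ℝ} (hA : A.PosDef)
    (d vmin vmax qmin qmax : Fin N → ℝ) (z p : Fin 4 → Fin N → ℝ) :
    dualFun A d vmin vmax qmin qmax (z + p) = dualFun A d vmin vmax qmin qmax z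
      + ∑ b, ∑ i, gradD A d vmin vmax qmin qmax z b i * p b i
      - (1 / 2) * (qOf A p ⬝ᵥ A *ᵥ qOf A p) := by
  have hadd : qOf A (z + p) = qOf A z + qOf A p := by
    simp only [qOf, Pi.add_apply, mulVec_sub, mulVec_add]
    abel
  have h1 := hA.dotProduct_mulVec_comm (qOf A z) (qOf A p)
  have h2 : qOf A z ⬝ᵥ A *ᵥ qOf A p =
      A *ᵥ qOf A z ⬝ᵥ p 0 - A *ᵥ qOf A z ⬝ᵥ p 1 + (qOf A z ⬝ᵥ p 2 - qOf A z ⬝ᵥ p 3) := by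
    rw [mulVec_qOf hA p, dotProduct_add, hA.dotProduct_mulVec_comm, dotProduct_comm (p 0 - p 1),
      dotProduct_sub, dotProduct_sub]
  have h3 : ∑ b, ∑ i, gradD A d vmin vmax qmin qmax z b i * p b i =
      (vmin - volt A d (qOf A z)) ⬝ᵥ p 0 + (volt A d (qOf A z) - vmax) ⬝ᵥ p 1
        + (qmin - qOf A z) ⬝ᵥ p 2 + (qOf A z - qmax) ⬝ᵥ p 3 := by
    rw [Fin.sum_univ_four]
    rfl
  rw [dualFun_eq hA, dualFun_eq hA, hadd, h3]
  simp only [dualOffset, volt, Pi.add_apply, add_dotProduct, sub_dotProduct, dotProduct_add,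
    dotProduct_sub, mulVec_add] at *
  rw [dotProduct_comm vmin, dotProduct_comm vmax, dotProduct_comm qmin, dotProduct_comm qmax,
    dotProduct_comm d, dotProduct_comm d]
  linarith

theorem mul_add_div_sq_le {a x y : ℝ} (ha : 0 < a) :
    a * (x + y / a) ^ 2 ≤ (a + a⁻¹) * (x ^ 2 + y ^ 2) := by
  have h : (a + a⁻¹) * (x ^ 2 + y ^ 2) - a * (x + y / a) ^ 2 = a⁻¹ * (a * y - x) ^ 2 := by
    field_simp
    ring
  have : 0 ≤ a⁻¹ * (a * y - x) ^ 2 := by positivity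
  linarith

/-- The quadratic form of `A` at `x + s` is controlled by the sizes of `x` and `A s`. -/
theorem quadForm_add_le {N : ℕ} {A : Matrix (Fin N) (Fin N) ℝ} (hA : A.PosDef) {L : ℝ}
    (hL : ∀ i, 2 * (hA.1.eigenvalues i + (hA.1.eigenvalues i)⁻¹) ≤ L) (x s : Fin N → ℝ) :
    (x + s) ⬝ᵥ A *ᵥ (x + s) ≤ L / 2 * (x ⬝ᵥ x + A *ᵥ s ⬝ᵥ A *ᵥ s) := by
  set U : Matrix (Fin N) (Fin N) ℝ := (hA.1.eigenvectorUnitary : Matrix (Fin N) (Fin N) ℝ)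
  set a := hA.1.eigenvalues
  have ha : ∀ i, 0 < a i := hA.eigenvalues_pos
  have hUU : U * Uᵀ = 1 := by
    simpa [star_eq_conjTranspose] using Unitary.coe_mul_star_self hA.1.eigenvectorUnitary
  have hUU' : Uᵀ * U = 1 := by
    simpa [star_eq_conjTranspose] using Unitary.coe_star_mul_self hA.1.eigenvectorUnitary
  have hAU : A = U * diagonal a * Uᵀ := by
    have := hA.1.spectral_theorem
    rw [Unitary.conjStarAlgAut_apply] at this
    simpa [star_eq_conjTranspose] using this
  have hUA : Uᵀ * A = diagonal a * Uᵀ := by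
    rw [hAU, ← Matrix.mul_assoc, ← Matrix.mul_assoc, hUU', Matrix.one_mul]
  have hdot : ∀ u v : Fin N → ℝ, u ⬝ᵥ v = (Uᵀ *ᵥ u) ⬝ᵥ (Uᵀ *ᵥ v) := fun u v => by
    rw [dotProduct_mulVec, ← mulVec_transpose, transpose_transpose, mulVec_mulVec, hUU,
      one_mulVec]
  have hA' : ∀ u i, (Uᵀ *ᵥ (A *ᵥ u)) i = a i * (Uᵀ *ᵥ u) i := fun u i => by
    rw [mulVec_mulVec, hUA, ← mulVec_mulVec, mulVec_diagonal]
  rw [hdot (x + s), hdot x, hdot (A *ᵥ s)]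
  simp only [dotProduct, ← Finset.sum_add_distrib, Finset.mul_sum]
  refine Finset.sum_le_sum fun i _ => ?_
  rw [hA', hA', mulVec_add, Pi.add_apply]
  have h := mul_add_div_sq_le (x := (Uᵀ *ᵥ x) i) (y := a i * (Uᵀ *ᵥ s) i) (ha i)
  rw [mul_div_cancel_left₀ _ (ha i).ne'] at h
  have hLi := hL i
  nlinarith [mul_le_mul_of_nonneg_right (show a i + (a i)⁻¹ ≤ L / 2 by linarith)
    (show 0 ≤ (Uᵀ *ᵥ x) i ^ 2 + (a i * (Uᵀ *ᵥ s) i) ^ 2 by positivity)]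

/-- The Hessian of the dual function is bounded by `L`. -/
theorem quadForm_qOf_le {N : ℕ} {A : Matrix (Fin N) (Fin N) ℝ} (hA : A.PosDef) {L : ℝ}
    (hL0 : 0 ≤ L)
    (hL : ∀ i, 2 * (hA.1.eigenvalues i + (hA.1.eigenvalues i)⁻¹) ≤ L)
    (p : Fin 4 → Fin N → ℝ) :
    qOf A p ⬝ᵥ A *ᵥ qOf A p ≤ L * ∑ b, ∑ i, p b i ^ 2 := by
  have hdet : IsUnit A.det := (isUnit_iff_isUnit_det A).1 hA.isUnit
  have h := quadForm_add_le hA hL (p 0 - p 1) (A⁻¹ *ᵥ (p 2 - p 3))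
  rw [mulVec_mulVec, mul_nonsing_inv A hdet, one_mulVec] at h
  refine h.trans ?_
  rw [div_mul_eq_mul_div, mul_div_assoc]
  refine mul_le_mul_of_nonneg_left ?_ hL0
  rw [div_le_iff₀ two_pos, Fin.sum_univ_four]
  simp only [dotProduct, ← Finset.sum_add_distrib, Finset.sum_mul, Pi.sub_apply]
  refine Finset.sum_le_sum fun i _ => ?_
  nlinarith [sq_nonneg (p 0 i + p 1 i), sq_nonneg (p 2 i + p 3 i)]

/-- Ascent lemma for the dual function. -/
theorem dualFun_add_ge {N : ℕ} {A : Matrix (Fin N) (Fin N) ℝ} (hA : A.PosDef) {L : ℝ}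
    (hL0 : 0 ≤ L)
    (hL : ∀ i, 2 * (hA.1.eigenvalues i + (hA.1.eigenvalues i)⁻¹) ≤ L)
    (d vmin vmax qmin qmax : Fin N → ℝ) (z p : Fin 4 → Fin N → ℝ) :
    dualFun A d vmin vmax qmin qmax z
      + ∑ b, ∑ i, (gradD A d vmin vmax qmin qmax z b i * p b i - L / 2 * p b i ^ 2)
      ≤ dualFun A d vmin vmax qmin qmax (z + p) := by
  have h := quadForm_qOf_le hA hL0 hL p
  rw [dualFun_add hA]
  simp only [Finset.sum_sub_distrib, ← Finset.mul_sum]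
  linarith

/-- Gain of one coordinate of a projected gradient step, relative to the unit projected step. -/
theorem projected_gradient_gain {z g α L : ℝ} (hz : 0 ≤ z) (hα0 : 0 < α) (hα1 : α ≤ 1)
    (hαL : L * α ≤ 2) :
    (α - L / 2 * α ^ 2) * (z - max (z + g) 0) ^ 2
      ≤ g * (max (z + α * g) 0 - z) - L / 2 * (max (z + α * g) 0 - z) ^ 2 := by
  set p := max (z + α * g) 0 - z with hp
  set u := z - max (z + g) 0 with hu
  have hgp : p ^ 2 ≤ α * (g * p) := by
    rcases max_cases (z + α * g) 0 with ⟨h, h'⟩ | ⟨h, h'⟩ <;> rw [hp, h] <;> nlinarith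
  have hup : (α * u) ^ 2 ≤ p ^ 2 := by
    apply sq_le_sq.2
    rcases max_cases (z + α * g) 0 with ⟨h, h'⟩ | ⟨h, h'⟩ <;>
    rcases max_cases (z + g) 0 with ⟨k, k'⟩ | ⟨k, k'⟩ <;> rw [hp, hu, h, k]
    · rw [← abs_neg]
      exact le_of_eq (by congr 1; ring)
    · rw [abs_of_nonneg (by nlinarith), abs_of_nonpos (by nlinarith)]
      nlinarith
    · nlinarith
    · rw [abs_of_nonneg (by nlinarith), abs_of_nonpos (by nlinarith)]
      nlinarith
  have h1 : α * ((α - L / 2 * α ^ 2) * u ^ 2) ≤ α * (g * p - L / 2 * p ^ 2) := by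
    nlinarith [mul_le_mul_of_nonneg_left hup (show 0 ≤ 1 - L * α / 2 by linarith)]
  exact le_of_mul_le_mul_left h1 hα0

theorem projected_sign_step_sq_le {z g β : ℝ} (hz : 0 ≤ z) (hβ : 0 ≤ β) :
    (max (z + β * sgn g) 0 - z) ^ 2 ≤ β ^ 2 := by
  unfold sgn
  apply sq_le_sq.2
  rw [abs_of_nonneg hβ, abs_le]
  split_ifs <;> rcases max_cases (z + β * 1) 0 with h | h <;>
    rcases max_cases (z + β * -1) 0 with k | k <;> constructor <;> linarith

theorem projected_sign_step_mul_nonneg {z g β : ℝ} (hz : 0 ≤ z) (hβ : 0 ≤ β) :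
    0 ≤ g * (max (z + β * sgn g) 0 - z) := by
  unfold sgn
  split_ifs with hg
  · exact mul_nonneg hg (by linarith [le_max_left (z + β * 1) 0])
  · exact mul_nonneg_of_nonpos_of_nonpos (by linarith)
      (by linarith [max_le (show z + β * -1 ≤ z by linarith) hz])

/-- First-order gain of a sign step along a coordinate whose optimality residual is at least
`c ≥ β`. -/
theorem projected_sign_step_gain {z g β c : ℝ} (hz : 0 ≤ z) (hβ : 0 ≤ β) (hβc : β ≤ c)
    (hu : c ^ 2 ≤ (z - max (z + g) 0) ^ 2) :
    β * c ≤ g * (max (z + β * sgn g) 0 - z) := by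
  have hu' : c ≤ |z - max (z + g) 0| := by
    simpa [abs_of_nonneg (hβ.trans hβc)] using sq_le_sq.1 hu
  unfold sgn
  split_ifs with hg
  · rw [max_eq_left (by linarith)] at hu' ⊢
    rw [show z - (z + g) = -g by ring, abs_neg, abs_of_nonneg hg] at hu'
    nlinarith
  · have h0 : max (z + g) 0 ≤ z := max_le (by linarith) hz
    rw [abs_of_nonneg (by linarith)] at hu'
    have h1 := le_max_left (z + g) 0
    have h2 := le_max_right (z + g) 0
    rw [max_eq_left (by linarith)]
    nlinarith

/-- Descent step (Proposition 2): if V(z) > ε and the step sizes satisfy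
α < 2/L, β < min{ε/(2N^{3/2}L), √(α(1 − Lα/2)ε²/(2NL))}, then the projected hybrid
gradient/sign step z̄ = (λ + α∇^λD(z), μ + β·sign(∇^μD(z))) satisfies
D(⌈z̄⌉₊) ≥ D(z) + δ(α,β) with
δ(α,β) = min{(α − (L/2)α²)ε²/2 − NLβ², εβLN/(2N^{3/2}L) − β²LN} > 0. -/
theorem stmt_8 (N : ℕ) (hN : 0 < N) (A : Matrix (Fin N) (Fin N) ℝ) (hA : A.PosDef)
    (d vmin vmax qmin qmax : Fin N → ℝ)
    (hv : ∀ i, vmin i ≤ vmax i) (hq : ∀ i, qmin i ≤ qmax i)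
    (L : ℝ)
    (hL : IsGreatest
      (Set.range fun i : Fin N => 2 * (hA.1.eigenvalues i + (hA.1.eigenvalues i)⁻¹)) L)
    (ε : ℝ) (hε : 0 < ε)
    (z : Fin 4 → Fin N → ℝ) (hz : ∀ b i, 0 ≤ z b i)
    (hV : ε < Vfun A d vmin vmax qmin qmax z)
    (α β : ℝ) (hα0 : 0 < α) (hα : α < 2 / L) (hβ0 : 0 < β)
    (hβ : β < min (ε / (2 * (N : ℝ) ^ ((3 : ℝ) / 2) * L))
      (Real.sqrt (α * (1 - L * α / 2) * ε ^ 2 / (2 * (N : ℝ) * L)))) :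
    0 < min ((α - (L / 2) * α ^ 2) * (ε ^ 2 / 2) - (N : ℝ) * L * β ^ 2)
        (ε * β * L * (N : ℝ) / (2 * (N : ℝ) ^ ((3 : ℝ) / 2) * L) - β ^ 2 * L * (N : ℝ)) ∧
    dualFun A d vmin vmax qmin qmax z
        + min ((α - (L / 2) * α ^ 2) * (ε ^ 2 / 2) - (N : ℝ) * L * β ^ 2)
            (ε * β * L * (N : ℝ) / (2 * (N : ℝ) ^ ((3 : ℝ) / 2) * L) - β ^ 2 * L * (N : ℝ))
      ≤ dualFun A d vmin vmax qmin qmax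
          (fun b i =>
            max (z b i + (if (b : ℕ) < 2 then α * gradD A d vmin vmax qmin qmax z b i
              else β * sgn (gradD A d vmin vmax qmin qmax z b i))) 0) := by
  obtain ⟨⟨i₀, hi₀⟩, hLub⟩ := hL
  have hL' : ∀ i, 2 * (hA.1.eigenvalues i + (hA.1.eigenvalues i)⁻¹) ≤ L :=
    fun i => hLub ⟨i, rfl⟩
  have hL4 : 4 ≤ L := by
    have ha := hA.eigenvalues_pos i₀
    have hinv := mul_inv_cancel₀ ha.ne'
    have := inv_pos.2 ha
    dsimp only at hi₀
    nlinarith [sq_nonneg (hA.1.eigenvalues i₀ - (hA.1.eigenvalues i₀)⁻¹)]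
  have hL0 : 0 < L := by linarith
  have hN0 : (0 : ℝ) < N := by exact_mod_cast hN
  have hN1 : (1 : ℝ) ≤ N := by exact_mod_cast hN
  have hαL : L * α < 2 := by
    rw [lt_div_iff₀ hL0] at hα
    linarith
  have hα1 : α ≤ 1 := by nlinarith
  have hpow : (N : ℝ) ^ ((3 : ℝ) / 2) = N * √N := by
    rw [show (3 : ℝ) / 2 = 1 + 1 / 2 by norm_num, Real.rpow_add hN0, Real.rpow_one,
      Real.sqrt_eq_rpow]
  obtain ⟨hβ1, hβ2⟩ := lt_min_iff.1 hβ
  set c := ε / (2 * √(N : ℝ)) with hc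
  have hsN : 0 < √(N : ℝ) := Real.sqrt_pos.2 hN0
  have hc2 : c ^ 2 = ε ^ 2 / (4 * N) := by
    rw [hc, div_pow, mul_pow, Real.sq_sqrt hN0.le]
    norm_num
  have hβc : β * (N * L) < c := by
    rw [← lt_div_iff₀ (by positivity), hc, div_div]
    convert hβ1 using 2
    rw [hpow]
    ring
  have hβc' : β ≤ c := by
    have hNL : 1 ≤ N * L := one_le_mul_of_one_le_of_one_le hN1 (by linarith)
    exact (le_mul_of_one_le_right hβ0.le hNL).trans hβc.le
  have hδ2 : ε * β * L * (N : ℝ) / (2 * (N : ℝ) ^ ((3 : ℝ) / 2) * L) = β * c := by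
    rw [hpow, hc]
    field_simp
  have hβsq : N * L * β ^ 2 < (α - (L / 2) * α ^ 2) * (ε ^ 2 / 2) := by
    rw [Real.lt_sqrt hβ0.le, lt_div_iff₀ (by positivity)] at hβ2
    nlinarith
  rw [hδ2]
  refine ⟨lt_min (by linarith) (by nlinarith), ?_⟩
  set g := gradD A d vmin vmax qmin qmax z with hg
  set p : Fin 4 → Fin N → ℝ := fun b i =>
    max (z b i + (if (b : ℕ) < 2 then α * g b i else β * sgn (g b i))) 0 - z b i with hp
  set u : Fin 4 → Fin N → ℝ := fun b i => z b i - max (z b i + g b i) 0 with hu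
  have hzp : (fun b i =>
      max (z b i + (if (b : ℕ) < 2 then α * g b i else β * sgn (g b i))) 0) = z + p := by
    ext b i
    simp [hp]
  rw [hzp]
  refine le_trans ?_ (dualFun_add_ge hA hL0.le hL' d vmin vmax qmin qmax z p)
  rw [← hg]
  gcongr
  set κ := α - L / 2 * α ^ 2 with hκ
  have hκ0 : 0 ≤ κ := by nlinarith
  have hlam : ∀ b : Fin 4, (b : ℕ) < 2 →
      κ * ∑ i, u b i ^ 2 ≤ ∑ i, (g b i * p b i - L / 2 * p b i ^ 2) := fun b hb => by
    rw [Finset.mul_sum]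
    refine Finset.sum_le_sum fun i _ => ?_
    simp only [hp, hu, if_pos hb]
    exact projected_gradient_gain (hz b i) hα0 hα1 hαL.le
  have hsq : ∀ b : Fin 4, ¬ (b : ℕ) < 2 → ∑ i, L / 2 * p b i ^ 2 ≤ N * (L / 2 * β ^ 2) :=
    fun b hb => by
    refine (Finset.sum_le_card_nsmul _ _ (L / 2 * β ^ 2) fun i _ => ?_).trans (by simp)
    simp only [hp, if_neg hb]
    exact mul_le_mul_of_nonneg_left (projected_sign_step_sq_le (hz b i) hβ0.le) (by linarith)
  have hnn : ∀ b : Fin 4, ¬ (b : ℕ) < 2 → ∀ i, 0 ≤ g b i * p b i := fun b hb i => by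
    simp only [hp, if_neg hb]
    exact projected_sign_step_mul_nonneg (hz b i) hβ0.le
  have hgain : ∀ b : Fin 4, ¬ (b : ℕ) < 2 → ε ^ 2 / 4 ≤ ∑ i, u b i ^ 2 →
      β * c ≤ ∑ i, g b i * p b i := fun b hb hs => by
    have : Nonempty (Fin N) := ⟨i₀⟩
    obtain ⟨i, -, hi⟩ := Finset.exists_le_of_sum_le (s := Finset.univ)
      (f := fun _ : Fin N => c ^ 2) (g := fun i => u b i ^ 2) Finset.univ_nonempty (by
        refine le_trans (le_of_eq ?_) hs
        rw [hc2]
        simp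
        field_simp)
    refine le_trans ?_ (Finset.single_le_sum (fun j _ => hnn b hb j) (Finset.mem_univ i))
    simp only [hp, if_neg hb]
    exact projected_sign_step_gain (hz b i) hβ0.le hβc' hi
  have hVsq : ε ^ 2 < ∑ b, ∑ i, u b i ^ 2 := by
    rw [Vfun, enorm4, Real.lt_sqrt hε.le] at hV
    exact hV
  have hl0 := hlam 0 (by decide)
  have hl1 := hlam 1 (by decide)
  have hs2 := hsq 2 (by decide)
  have hs3 := hsq 3 (by decide)
  have hn2 := Finset.sum_nonneg fun i (_ : i ∈ Finset.univ) => hnn 2 (by decide) i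
  have hn3 := Finset.sum_nonneg fun i (_ : i ∈ Finset.univ) => hnn 3 (by decide) i
  have hu0 : ∀ b, 0 ≤ ∑ i, u b i ^ 2 := fun b => Finset.sum_nonneg fun i _ => sq_nonneg _
  rw [Fin.sum_univ_four] at hVsq ⊢
  simp only [Finset.sum_sub_distrib] at hl0 hl1 ⊢
  by_cases hcase : ε ^ 2 / 2 ≤ ∑ i, u 0 i ^ 2 + ∑ i, u 1 i ^ 2
  · refine (min_le_left _ _).trans ?_
    have := mul_le_mul_of_nonneg_left hcase hκ0
    linarith
  · refine (min_le_right _ _).trans ?_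
    have h0 := mul_nonneg hκ0 (hu0 0)
    have h1 := mul_nonneg hκ0 (hu0 1)
    have h23 : β * c ≤ ∑ i, g 2 i * p 2 i + ∑ i, g 3 i * p 3 i := by
      by_cases h2 : ε ^ 2 / 4 ≤ ∑ i, u 2 i ^ 2
      · linarith [hgain 2 (by decide) h2]
      · linarith [hgain 3 (by decide) (by linarith)]
    linarith

end
end

section
/- Assume the primal problem is feasible. Let ε ∈ (0,1] and choose step sizes α = 1/L and β = ε/(4 N^{3/2} L). Then there exists T ∈ ℕ such that the VC-LB iterates satisfy fes(q(z(T))) ≤ ε, and T is upper bounded by T ≤ ⌈ 16 N³ L Q λ_max(A) / ε² ⌉, where Q = max{ (q^min_i)², (q^max_i)² : i = 1,…,N } and λ_max(A) is the largest eigenvalue of A. -/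
open Matrix

noncomputable section

namespace VoltageControl

variable {N : ℕ} {A : Matrix (Fin N) (Fin N) ℝ}

/-- Coordinates of `w` in the eigenbasis of `A`. -/
def eigenCoord (hA : A.IsHermitian) (w : Fin N → ℝ) : Fin N → ℝ :=
  star (hA.eigenvectorUnitary : Matrix (Fin N) (Fin N) ℝ) *ᵥ w

lemma eigenCoord_add (hA : A.IsHermitian) (v w : Fin N → ℝ) :
    eigenCoord hA (v + w) = eigenCoord hA v + eigenCoord hA w :=
  mulVec_add _ _ _

lemma eigenCoord_dotProduct (hA : A.IsHermitian) (v w : Fin N → ℝ) :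
    eigenCoord hA v ⬝ᵥ eigenCoord hA w = v ⬝ᵥ w := by
  have hU : (hA.eigenvectorUnitary : Matrix (Fin N) (Fin N) ℝ) *
      star (hA.eigenvectorUnitary : Matrix (Fin N) (Fin N) ℝ) = 1 :=
    Unitary.coe_mul_star_self _
  unfold eigenCoord
  rw [dotProduct_mulVec, vecMul_mulVec, star_eq_conjTranspose, conjTranspose_eq_transpose_of_trivial,
    transpose_transpose] at *
  rw [hU, vecMul_one]

lemma eigenCoord_mulVec (hA : A.IsHermitian) (w : Fin N → ℝ) (i : Fin N) :
    eigenCoord hA (A *ᵥ w) i = hA.eigenvalues i * eigenCoord hA w i := by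
  have h := hA.conjStarAlgAut_star_eigenvectorUnitary
  rw [Unitary.conjStarAlgAut_star_apply] at h
  have hU : (hA.eigenvectorUnitary : Matrix (Fin N) (Fin N) ℝ) *
      star (hA.eigenvectorUnitary : Matrix (Fin N) (Fin N) ℝ) = 1 :=
    Unitary.coe_mul_star_self _
  have h2 : star (hA.eigenvectorUnitary : Matrix (Fin N) (Fin N) ℝ) * A =
      diagonal hA.eigenvalues * star (hA.eigenvectorUnitary : Matrix (Fin N) (Fin N) ℝ) := by
    have h3 := congrArg
      (· * star (hA.eigenvectorUnitary : Matrix (Fin N) (Fin N) ℝ)) h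
    simp only [Matrix.mul_assoc, hU, Matrix.mul_one] at h3
    exact h3
  unfold eigenCoord
  rw [mulVec_mulVec, h2, ← mulVec_mulVec, mulVec_diagonal]

lemma sum_sq_eigenCoord (hA : A.IsHermitian) (w : Fin N → ℝ) :
    ∑ i, eigenCoord hA w i ^ 2 = ∑ i, w i ^ 2 := by
  simpa [dotProduct, sq] using eigenCoord_dotProduct hA w w

lemma dotProduct_mulVec_eq_sum_eigenvalues (hA : A.IsHermitian) (w : Fin N → ℝ) :
    w ⬝ᵥ A *ᵥ w = ∑ i, hA.eigenvalues i * eigenCoord hA w i ^ 2 := by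
  rw [← eigenCoord_dotProduct hA, dotProduct]
  refine Finset.sum_congr rfl fun i _ => ?_
  rw [eigenCoord_mulVec]
  ring

lemma dotProduct_mulVec_le (hA : A.IsHermitian) {c : ℝ} (hc : ∀ i, hA.eigenvalues i ≤ c)
    (w : Fin N → ℝ) : w ⬝ᵥ A *ᵥ w ≤ c * ∑ i, w i ^ 2 := by
  rw [dotProduct_mulVec_eq_sum_eigenvalues hA, ← sum_sq_eigenCoord hA w, Finset.mul_sum]
  exact Finset.sum_le_sum fun i _ => mul_le_mul_of_nonneg_right (hc i) (sq_nonneg _)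

lemma mulVec_inv_mulVec (hA : A.PosDef) (y : Fin N → ℝ) : A *ᵥ (A⁻¹ *ᵥ y) = y := by
  rw [mulVec_mulVec, Matrix.mul_nonsing_inv _ (Matrix.isUnit_iff_isUnit_det _ |>.1 hA.isUnit),
    one_mulVec]

lemma mulVec_qOf (hA : A.PosDef) (z : Fin 4 → Fin N → ℝ) :
    A *ᵥ qOf A z = A *ᵥ (z 0 - z 1) + (z 2 - z 3) := by
  rw [qOf, mulVec_add, mulVec_inv_mulVec hA]

lemma dotProduct_mulVec_comm (hA : A.IsHermitian) (v w : Fin N → ℝ) :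
    v ⬝ᵥ A *ᵥ w = w ⬝ᵥ A *ᵥ v := by
  have hT : Aᵀ = A := by simpa using hA.eq
  rw [dotProduct_mulVec, ← mulVec_transpose, hT, dotProduct_comm]

lemma qOf_add (z s : Fin 4 → Fin N → ℝ) : qOf A (z + s) = qOf A z + qOf A s := by
  simp only [qOf, Pi.add_apply, ← mulVec_add, add_sub_add_comm, add_add_add_comm]

/-- The largest eigenvalue of the negative Hessian of the dual function is at most `L`. -/
lemma qOf_quadForm_le (hA : A.PosDef) {L : ℝ}
    (hL : ∀ i, 2 * (hA.1.eigenvalues i + (hA.1.eigenvalues i)⁻¹) ≤ L)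
    (s : Fin 4 → Fin N → ℝ) :
    qOf A s ⬝ᵥ A *ᵥ qOf A s ≤ L * ∑ b, ∑ i, s b i ^ 2 := by
  set x := s 0 - s 1 with hx
  set y := s 2 - s 3 with hy
  have hquad : qOf A s ⬝ᵥ A *ᵥ qOf A s ≤ L / 2 * (∑ i, x i ^ 2 + ∑ i, y i ^ 2) := by
    rw [dotProduct_mulVec_eq_sum_eigenvalues hA.1, ← sum_sq_eigenCoord hA.1 x,
      ← sum_sq_eigenCoord hA.1 y, ← Finset.sum_add_distrib, Finset.mul_sum]
    refine Finset.sum_le_sum fun i _ => ?_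
    have hpos := hA.eigenvalues_pos i
    have hcoord : hA.1.eigenvalues i * eigenCoord hA.1 (qOf A s) i =
        hA.1.eigenvalues i * eigenCoord hA.1 x i + eigenCoord hA.1 y i := by
      rw [← eigenCoord_mulVec, ← eigenCoord_mulVec, mulVec_qOf hA, eigenCoord_add, Pi.add_apply]
    have hLi := hL i
    generalize hA.1.eigenvalues i = l at *
    generalize eigenCoord hA.1 (qOf A s) i = a at *
    generalize eigenCoord hA.1 x i = u at *
    generalize eigenCoord hA.1 y i = w at *
    have ha : a = u + w * l⁻¹ := by
      field_simp
      linarith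
    have hbound : l * a ^ 2 ≤ (l + l⁻¹) * (u ^ 2 + w ^ 2) := by
      have h1 : (l + l⁻¹) * (u ^ 2 + w ^ 2) - l * a ^ 2 = l⁻¹ * (l * w - u) ^ 2 := by
        rw [ha]
        field_simp
        ring
      have h2 : 0 ≤ l⁻¹ * (l * w - u) ^ 2 := by positivity
      linarith
    have hsq : 0 ≤ u ^ 2 + w ^ 2 := by positivity
    nlinarith
  have hsum : ∑ i, x i ^ 2 + ∑ i, y i ^ 2 ≤ 2 * ∑ b, ∑ i, s b i ^ 2 := by
    simp only [Fin.sum_univ_four, ← Finset.sum_add_distrib, Finset.mul_sum]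
    refine Finset.sum_le_sum fun i _ => ?_
    simp only [hx, hy, Pi.sub_apply]
    nlinarith [sq_nonneg (s 0 i + s 1 i), sq_nonneg (s 2 i + s 3 i)]
  rcases isEmpty_or_nonempty (Fin N) with hE | ⟨⟨i⟩⟩
  · simp [dotProduct]
  have hpos := hA.eigenvalues_pos i
  have hL0 : 0 ≤ L := le_trans (by positivity) (hL i)
  nlinarith [mul_le_mul_of_nonneg_left hsum hL0]

/-- Closed form of the Lagrangian dual function. -/
def dualValue (A : Matrix (Fin N) (Fin N) ℝ) (d vmin vmax qmin qmax : Fin N → ℝ)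
    (z : Fin 4 → Fin N → ℝ) : ℝ :=
  -(1 / 2) * (qOf A z ⬝ᵥ A *ᵥ qOf A z) + z 0 ⬝ᵥ (vmin - d) + z 1 ⬝ᵥ (d - vmax)
    + z 2 ⬝ᵥ qmin - z 3 ⬝ᵥ qmax

variable {d vmin vmax qmin qmax : Fin N → ℝ}

lemma dualValue_zero : dualValue A d vmin vmax qmin qmax 0 = 0 := by
  simp [dualValue, qOf]

lemma dualValue_add (hA : A.PosDef) (z s : Fin 4 → Fin N → ℝ) :
    dualValue A d vmin vmax qmin qmax (z + s) = dualValue A d vmin vmax qmin qmax z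
      + ∑ b, ∑ i, gradD A d vmin vmax qmin qmax z b i * s b i
      - 1 / 2 * (qOf A s ⬝ᵥ A *ᵥ qOf A s) := by
  have hcross : qOf A z ⬝ᵥ A *ᵥ qOf A s =
      (s 0 - s 1) ⬝ᵥ A *ᵥ qOf A z + (s 2 - s 3) ⬝ᵥ qOf A z := by
    rw [mulVec_qOf hA s, dotProduct_add, dotProduct_mulVec_comm hA.1,
      dotProduct_comm (qOf A z) (s 2 - s 3)]
  have hgrad : ∑ b, ∑ i, gradD A d vmin vmax qmin qmax z b i * s b i =
      s 0 ⬝ᵥ (vmin - volt A d (qOf A z)) + s 1 ⬝ᵥ (volt A d (qOf A z) - vmax)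
        + s 2 ⬝ᵥ (qmin - qOf A z) + s 3 ⬝ᵥ (qOf A z - qmax) := by
    simp [Fin.sum_univ_four, gradD, dotProduct, mul_comm]
  rw [hgrad]
  have hsymm := dotProduct_mulVec_comm hA.1 (qOf A s) (qOf A z)
  simp only [dualValue, qOf_add, volt, Pi.add_apply, mulVec_add, dotProduct_add, add_dotProduct,
    dotProduct_sub, sub_dotProduct] at *
  linarith

/-- Weak duality. -/
lemma dualValue_le_of_feasible (hA : A.PosDef) {p : Fin N → ℝ}
    (hp : ∀ i, qmin i ≤ p i ∧ p i ≤ qmax i)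
    (hpv : ∀ i, vmin i ≤ volt A d p i ∧ volt A d p i ≤ vmax i)
    {z : Fin 4 → Fin N → ℝ} (hz : ∀ b i, 0 ≤ z b i) :
    dualValue A d vmin vmax qmin qmax z ≤ 1 / 2 * (p ⬝ᵥ A *ᵥ p) := by
  have hnonneg : 0 ≤ (p - qOf A z) ⬝ᵥ A *ᵥ (p - qOf A z) := by
    simpa using hA.posSemidef.dotProduct_mulVec_nonneg (p - qOf A z)
  have hcross : p ⬝ᵥ A *ᵥ qOf A z = (z 0 - z 1) ⬝ᵥ A *ᵥ p + (z 2 - z 3) ⬝ᵥ p := by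
    rw [mulVec_qOf hA z, dotProduct_add, dotProduct_mulVec_comm hA.1,
      dotProduct_comm p (z 2 - z 3)]
  have h0 : z 0 ⬝ᵥ (vmin - d) ≤ z 0 ⬝ᵥ A *ᵥ p :=
    Finset.sum_le_sum fun i _ => mul_le_mul_of_nonneg_left (by
      have := (hpv i).1
      simp only [volt, Pi.add_apply, Pi.sub_apply] at *
      linarith) (hz 0 i)
  have h1 : z 1 ⬝ᵥ A *ᵥ p ≤ z 1 ⬝ᵥ (vmax - d) :=
    Finset.sum_le_sum fun i _ => mul_le_mul_of_nonneg_left (by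
      have := (hpv i).2
      simp only [volt, Pi.add_apply, Pi.sub_apply] at *
      linarith) (hz 1 i)
  have h2 : z 2 ⬝ᵥ qmin ≤ z 2 ⬝ᵥ p :=
    Finset.sum_le_sum fun i _ => mul_le_mul_of_nonneg_left (hp i).1 (hz 2 i)
  have h3 : z 3 ⬝ᵥ p ≤ z 3 ⬝ᵥ qmax :=
    Finset.sum_le_sum fun i _ => mul_le_mul_of_nonneg_left (hp i).2 (hz 3 i)
  have hsymm := dotProduct_mulVec_comm hA.1 (qOf A z) p
  simp only [dualValue, mulVec_sub, dotProduct_sub, sub_dotProduct] at *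
  linarith

lemma fes_le (hv : ∀ i, vmin i ≤ vmax i) (hq : ∀ i, qmin i ≤ qmax i) (z : Fin 4 → Fin N → ℝ) :
    fes A d vmin vmax qmin qmax (qOf A z) ≤
      √(∑ b, ∑ i, max (gradD A d vmin vmax qmin qmax z b i) 0 ^ 2) := by
  have clamp_sq : ∀ a b x : ℝ, a ≤ b →
      (x - max a (min x b)) ^ 2 = max (a - x) 0 ^ 2 + max (x - b) 0 ^ 2 := by
    intro a b x hab
    rcases le_total x a with h | h
    · rw [min_eq_left (h.trans hab), max_eq_left h, max_eq_left (by linarith),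
        max_eq_right (by linarith)]
      ring
    · rcases le_total x b with h' | h'
      · rw [min_eq_left h', max_eq_right h, max_eq_right (by linarith),
          max_eq_right (by linarith)]
        ring
      · rw [min_eq_right h', max_eq_right hab, max_eq_right (by linarith),
          max_eq_left (by linarith)]
        ring
  refine csInf_le ⟨0, ?_⟩ ⟨fun i => max (qmin i) (min (qOf A z i) (qmax i)),
    fun i => max (vmin i) (min (volt A d (qOf A z) i) (vmax i)), fun i => ?_, fun i => ?_, ?_⟩
  · rintro r ⟨y1, y2, -, -, rfl⟩
    exact Real.sqrt_nonneg _
  · exact ⟨le_max_left _ _, max_le (hq i) (min_le_right _ _)⟩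
  · exact ⟨le_max_left _ _, max_le (hv i) (min_le_right _ _)⟩
  · simp only [clamp_sq _ _ _ (hq _), clamp_sq _ _ _ (hv _), Fin.sum_univ_four, gradD,
      Finset.sum_add_distrib]
    simp
    ring_nf

/-- Gain in one coordinate from a projected gradient step of size `1 / L`. -/
lemma gain_of_gradient_step {L z g : ℝ} (hL : 0 < L) (hz : 0 ≤ z) :
    max g 0 ^ 2 / (2 * L) ≤
      g * (max (z + 1 / L * g) 0 - z) - L / 2 * (max (z + 1 / L * g) 0 - z) ^ 2 := by
  obtain ⟨k, rfl⟩ : ∃ k, g = L * k := ⟨g / L, by field_simp⟩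
  have hk : 1 / L * (L * k) = k := by field_simp
  rw [hk]
  rcases le_total 0 k with h | h
  · rw [max_eq_left (by positivity), max_eq_left (by positivity)]
    apply le_of_eq
    field_simp
    ring
  · rw [max_eq_right (mul_nonpos_of_nonneg_of_nonpos hL.le h)]
    rcases le_total 0 (z + k) with h' | h'
    · rw [max_eq_left h']
      have : 0 ≤ L * k ^ 2 := by positivity
      norm_num
      nlinarith
    · rw [max_eq_right h']
      have h1 : 0 ≤ L * z * (-(z + k)) := by
        have : 0 ≤ -(z + k) := by linarith
        positivity
      have h2 : 0 ≤ L * z * (-k) := by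
        have : 0 ≤ -k := by linarith
        positivity
      norm_num
      nlinarith

/-- Gain in one coordinate from a projected sign step of size `β`. -/
lemma gain_of_sign_step {L z g β : ℝ} (hL : 0 < L) (hz : 0 ≤ z) (hβ : 0 ≤ β) :
    β * max g 0 - L / 2 * β ^ 2 ≤
      g * (max (z + β * sgn g) 0 - z) - L / 2 * (max (z + β * sgn g) 0 - z) ^ 2 := by
  unfold sgn
  split_ifs with h
  · rw [max_eq_left h, max_eq_left (by linarith)]
    apply le_of_eq
    ring
  · push Not at h
    rw [max_eq_right h.le]
    have hlow : -β ≤ max (z + β * -1) 0 - z := by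
      linarith [le_max_left (z + β * -1) 0]
    have hup : max (z + β * -1) 0 - z ≤ 0 := by
      have : max (z + β * -1) 0 ≤ z := max_le (by linarith) hz
      linarith
    generalize max (z + β * -1) 0 - z = s at *
    have h1 : 0 ≤ g * s := mul_nonneg_of_nonpos_of_nonpos h.le hup
    have h2 : s ^ 2 ≤ β ^ 2 := by nlinarith
    nlinarith

lemma sqrt_sum_sq_le_sum {ι : Type*} (s : Finset ι) {f : ι → ℝ} (hf : ∀ i ∈ s, 0 ≤ f i) :
    √(∑ i ∈ s, f i ^ 2) ≤ ∑ i ∈ s, f i := by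
  rw [Real.sqrt_le_left (Finset.sum_nonneg hf)]
  exact Finset.sum_sq_le_sq_sum_of_nonneg hf

/-- One VC-LB step gains at least `P / (2L) + β √M - N L β²`, with `P` and `M` the squared
constraint violations of the voltage and power blocks. -/
lemma dualValue_step (hA : A.PosDef) {L β : ℝ} (hL0 : 0 < L) (hβ : 0 ≤ β)
    (hL : ∀ i, 2 * (hA.1.eigenvalues i + (hA.1.eigenvalues i)⁻¹) ≤ L)
    {z z' : Fin 4 → Fin N → ℝ} (hz : ∀ b i, 0 ≤ z b i)
    (hstep : ∀ b i, z' b i =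
      max (z b i + (if (b : ℕ) < 2 then 1 / L * gradD A d vmin vmax qmin qmax z b i
        else β * sgn (gradD A d vmin vmax qmin qmax z b i))) 0) :
    dualValue A d vmin vmax qmin qmax z
      + (∑ i, max (gradD A d vmin vmax qmin qmax z 0 i) 0 ^ 2
        + ∑ i, max (gradD A d vmin vmax qmin qmax z 1 i) 0 ^ 2) / (2 * L)
      + β * √(∑ i, max (gradD A d vmin vmax qmin qmax z 2 i) 0 ^ 2
        + ∑ i, max (gradD A d vmin vmax qmin qmax z 3 i) 0 ^ 2) - N * L * β ^ 2
      ≤ dualValue A d vmin vmax qmin qmax z' := by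
  have hadd := dualValue_add (d := d) (vmin := vmin) (vmax := vmax) (qmin := qmin) (qmax := qmax)
    hA z (z' - z)
  rw [add_sub_cancel] at hadd
  have hquad := qOf_quadForm_le hA hL (z' - z)
  set g := gradD A d vmin vmax qmin qmax z with hg
  have hgrad : ∀ b : Fin 4, (b : ℕ) < 2 → (∑ i, max (g b i) 0 ^ 2) / (2 * L) ≤
      ∑ i, g b i * (z' - z) b i - L / 2 * ∑ i, (z' - z) b i ^ 2 := by
    intro b hb
    rw [Finset.sum_div, Finset.mul_sum, ← Finset.sum_sub_distrib]
    refine Finset.sum_le_sum fun i _ => ?_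
    simp only [Pi.sub_apply, hstep b i, if_pos hb]
    exact gain_of_gradient_step hL0 (hz b i)
  have hsign : ∀ b : Fin 4, ¬ (b : ℕ) < 2 → β * ∑ i, max (g b i) 0 - N * (L / 2 * β ^ 2) ≤
      ∑ i, g b i * (z' - z) b i - L / 2 * ∑ i, (z' - z) b i ^ 2 := by
    intro b hb
    have hconst : (N : ℝ) * (L / 2 * β ^ 2) = ∑ _i : Fin N, L / 2 * β ^ 2 := by simp
    rw [hconst, Finset.mul_sum, Finset.mul_sum, ← Finset.sum_sub_distrib, ← Finset.sum_sub_distrib]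
    refine Finset.sum_le_sum fun i _ => ?_
    simp only [Pi.sub_apply, hstep b i, if_neg hb]
    exact gain_of_sign_step hL0 (hz b i) hβ
  have hsqrt : √(∑ i, max (g 2 i) 0 ^ 2 + ∑ i, max (g 3 i) 0 ^ 2) ≤
      ∑ i, max (g 2 i) 0 + ∑ i, max (g 3 i) 0 := by
    have h := sqrt_sum_sq_le_sum (Finset.univ : Finset (Fin N ⊕ Fin N))
      (f := Sum.elim (fun i => max (g 2 i) 0) (fun i => max (g 3 i) 0)) (by
        rintro (i | i) - <;> exact le_max_right _ _)
    simpa using h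
  have h0 := hgrad 0 (by decide)
  have h1 := hgrad 1 (by decide)
  have h2 := hsign 2 (by decide)
  have h3 := hsign 3 (by decide)
  have h4 := mul_le_mul_of_nonneg_left hsqrt hβ
  simp only [Fin.sum_univ_four] at hadd hquad
  rw [add_div]
  linarith

/-- The gain of a step when the total squared violation `P + M` exceeds `ε²`. -/
lemma gain_lower_bound {n L ε P M β : ℝ} (hn : 1 ≤ n) (hL : 0 < L) (hε : 0 < ε)
    (hP : 0 ≤ P) (hM : 0 ≤ M) (hPM : ε ^ 2 ≤ P + M)
    (hβ : β = ε / (4 * n ^ ((3 : ℝ) / 2) * L)) :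
    ε ^ 2 / (32 * n ^ 2 * L) ≤ P / (2 * L) + β * √M - n * L * β ^ 2 := by
  have hn0 : 0 < n := by linarith
  set r := n ^ ((3 : ℝ) / 2) with hr
  have hr0 : 0 < r := Real.rpow_pos_of_pos hn0 _
  have hr2 : r ^ 2 = n ^ 3 := by
    rw [hr, ← Real.rpow_natCast, ← Real.rpow_mul hn0.le, ← Real.rpow_natCast]
    norm_num
  have hrn : r ≤ n ^ 2 := by
    rw [hr, ← Real.rpow_natCast n 2]
    exact Real.rpow_le_rpow_of_exponent_le hn (by norm_num)
  have hloss : n * L * β ^ 2 = ε ^ 2 / (16 * n ^ 2 * L) := by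
    rw [hβ, div_pow, mul_pow, mul_pow, hr2]
    field_simp
    norm_num
  have hβ' : ε / (4 * n ^ 2 * L) ≤ β := by
    rw [hβ]
    gcongr
  have hm := Real.sq_sqrt hM
  set m := √M
  have hm0 : 0 ≤ m := Real.sqrt_nonneg _
  have hgain : ε * m / (4 * n ^ 2 * L) ≤ β * m := by
    rw [mul_div_right_comm]
    exact mul_le_mul_of_nonneg_right hβ' hm0
  have hPscaled : P / (2 * n ^ 2 * L) ≤ P / (2 * L) := by
    gcongr
    nlinarith
  have hcore : ε ^ 2 * 3 ≤ 16 * P + 8 * (ε * m) := by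
    rcases le_total ε m with h | h
    · nlinarith
    · nlinarith
  have hcombine : ε ^ 2 / (32 * n ^ 2 * L) + ε ^ 2 / (16 * n ^ 2 * L) ≤
      P / (2 * n ^ 2 * L) + ε * m / (4 * n ^ 2 * L) := by
    have h1 : ε ^ 2 / (32 * n ^ 2 * L) + ε ^ 2 / (16 * n ^ 2 * L) =
        (ε ^ 2 * 3) / (32 * n ^ 2 * L) := by
      field_simp
      norm_num
    have h2 : P / (2 * n ^ 2 * L) + ε * m / (4 * n ^ 2 * L) =
        (16 * P + 8 * (ε * m)) / (32 * n ^ 2 * L) := by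
      field_simp
      ring
    rw [h1, h2]
    gcongr
  linarith

lemma sum_sq_le_of_mem_box {p : Fin N → ℝ} {Q : ℝ} (hp : ∀ i, qmin i ≤ p i ∧ p i ≤ qmax i)
    (hmin : ∀ i, qmin i ^ 2 ≤ Q) (hmax : ∀ i, qmax i ^ 2 ≤ Q) : ∑ i, p i ^ 2 ≤ N * Q := by
  have h : ∑ i, p i ^ 2 ≤ ∑ _i : Fin N, Q := by
    refine Finset.sum_le_sum fun i _ => ?_
    rcases le_total 0 (p i) with h | h
    · nlinarith [hp i, hmax i]
    · nlinarith [hp i, hmin i]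
  simpa using h

end VoltageControl

open VoltageControl in
/-- Theorem 1: if the primal problem is feasible, ε ∈ (0,1], and the step sizes are
α = 1/L and β = ε/(4N^{3/2}L), then the VC-LB iterates reach fes(q(z(T))) ≤ ε for some
T ≤ ⌈16N³LQλ_max(A)/ε²⌉, where Q = max{(q^min_i)², (q^max_i)² : i} and λ_max(A) is the
largest eigenvalue of A. -/
theorem stmt_10 (N : ℕ) (hN : 0 < N) (A : Matrix (Fin N) (Fin N) ℝ) (hA : A.PosDef)
    (d vmin vmax qmin qmax : Fin N → ℝ)
    (hv : ∀ i, vmin i ≤ vmax i) (hq : ∀ i, qmin i ≤ qmax i)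
    (hfeas : ∃ q : Fin N → ℝ, (∀ i, qmin i ≤ q i ∧ q i ≤ qmax i) ∧
      ∀ i, vmin i ≤ volt A d q i ∧ volt A d q i ≤ vmax i)
    (L : ℝ)
    (hL : IsGreatest
      (Set.range fun i : Fin N => 2 * (hA.1.eigenvalues i + (hA.1.eigenvalues i)⁻¹)) L)
    (Q : ℝ)
    (hQ : IsGreatest
      ((Set.range fun i : Fin N => qmin i ^ 2) ∪ Set.range fun i : Fin N => qmax i ^ 2) Q)
    (lmax : ℝ) (hlmax : IsGreatest (Set.range hA.1.eigenvalues) lmax)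
    (ε : ℝ) (hε0 : 0 < ε) (hε1 : ε ≤ 1)
    (α β : ℝ) (hα : α = 1 / L) (hβ : β = ε / (4 * (N : ℝ) ^ ((3 : ℝ) / 2) * L))
    (ziter : ℕ → Fin 4 → Fin N → ℝ) (hz0 : ziter 0 = 0)
    (hstep : ∀ t b i, ziter (t + 1) b i =
      max (ziter t b i + (if (b : ℕ) < 2 then α * gradD A d vmin vmax qmin qmax (ziter t) b i
        else β * sgn (gradD A d vmin vmax qmin qmax (ziter t) b i))) 0) :
    ∃ T : ℕ,
      T ≤ ⌈16 * (N : ℝ) ^ 3 * L * Q * lmax / ε ^ 2⌉₊ ∧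
      fes A d vmin vmax qmin qmax (qOf A (ziter T)) ≤ ε := by
  have hLi : ∀ i, 2 * (hA.1.eigenvalues i + (hA.1.eigenvalues i)⁻¹) ≤ L :=
    fun i => hL.2 ⟨i, rfl⟩
  have hL0 : 0 < L := by
    obtain ⟨i, rfl⟩ := hL.1
    have := hA.eigenvalues_pos i
    positivity
  have hn : (1 : ℝ) ≤ N := by exact_mod_cast hN
  have hn0 : (0 : ℝ) < N := by linarith
  have hβ0 : 0 ≤ β := by
    rw [hβ]
    positivity
  have hz : ∀ t b i, 0 ≤ ziter t b i := by
    intro t b i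
    cases t with
    | zero => simp [hz0]
    | succ t => exact hstep t b i ▸ le_max_right _ _
  subst hα
  by_contra! hcon
  set X := 16 * (N : ℝ) ^ 3 * L * Q * lmax / ε ^ 2 with hX
  set δ := ε ^ 2 / (32 * (N : ℝ) ^ 2 * L) with hδ
  have hδ0 : 0 < δ := by positivity
  have hgain : ∀ t ≤ ⌈X⌉₊, dualValue A d vmin vmax qmin qmax (ziter t) + δ ≤
      dualValue A d vmin vmax qmin qmax (ziter (t + 1)) := by
    intro t ht
    have hviol := ((hcon t ht).trans_le (fes_le hv hq (ziter t)))
    rw [Real.lt_sqrt hε0.le, Fin.sum_univ_four] at hviol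
    have hs := dualValue_step hA hL0 hβ0 hLi (hz t) (hstep t)
    have hb := gain_lower_bound (P := ∑ i, max (gradD A d vmin vmax qmin qmax (ziter t) 0 i) 0 ^ 2
        + ∑ i, max (gradD A d vmin vmax qmin qmax (ziter t) 1 i) 0 ^ 2)
      (M := ∑ i, max (gradD A d vmin vmax qmin qmax (ziter t) 2 i) 0 ^ 2
        + ∑ i, max (gradD A d vmin vmax qmin qmax (ziter t) 3 i) 0 ^ 2)
      hn hL0 hε0 (by positivity) (by positivity) (by linarith) hβ
    linarith
  have htotal : ∀ t ≤ ⌈X⌉₊ + 1, t * δ ≤ dualValue A d vmin vmax qmin qmax (ziter t) := by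
    intro t
    induction t with
    | zero => simp [hz0, dualValue_zero]
    | succ t ih =>
      intro ht
      have h1 := ih (by omega)
      have h2 := hgain t (by omega)
      push_cast
      linarith
  obtain ⟨p, hp, hpv⟩ := hfeas
  have hupper : dualValue A d vmin vmax qmin qmax (ziter (⌈X⌉₊ + 1)) ≤ X * δ := by
    have hlmax0 : 0 < lmax := by
      obtain ⟨i, rfl⟩ := hlmax.1
      exact hA.eigenvalues_pos i
    have h1 := dualValue_le_of_feasible hA hp hpv (hz (⌈X⌉₊ + 1))
    have h2 := dotProduct_mulVec_le hA.1 (fun i => hlmax.2 ⟨i, rfl⟩) p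
    have h3 := mul_le_mul_of_nonneg_left (sum_sq_le_of_mem_box hp
      (fun i => hQ.2 (Or.inl ⟨i, rfl⟩)) (fun i => hQ.2 (Or.inr ⟨i, rfl⟩))) hlmax0.le
    have h4 : X * δ = 1 / 2 * (lmax * (N * Q)) := by
      rw [hX, hδ]
      field_simp
      ring
    linarith
  have hlower := htotal _ le_rfl
  have hceil := Nat.le_ceil X
  push_cast at hlower
  nlinarith

end
end
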